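/- arXiv:1901.06301 — 4 statements merged into one kernel-verified Lean document; each statement's English description precedes it below -/
import Mathlib

section
/- Let r be an odd natural number and let W = {f ∈ V : f(x+y, −x) = −f(x,y)}. Then the dimension of W over ℝ equals (r−1)/3 if r ≡ 1 (mod 6), (r+3)/3 if r ≡ 3 (mod 6), and (r+1)/3 if r ≡ 5 (mod 6). -/
open MvPolynomial

/-- The substitution `(ρ* f)(x,y) = f(x+y, -x)` as a linear endomorphism of `ℝ[x,y]`. -/
noncomputable def rhoStar : MvPolynomial (Fin 2) ℝ →ₗ[ℝ] MvPolynomial (Fin 2) ℝ :=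
  (aeval ![X 0 + X 1, -X 0]).toLinearMap

/-- The subspace `W = {f ∈ V : f(x+y, -x) = -f(x,y)}` of the space `V` of homogeneous
polynomials of degree `r`, i.e. `V ⊓ ker (ρ* + id)`. -/
noncomputable def W (r : ℕ) : Submodule ℝ (MvPolynomial (Fin 2) ℝ) :=
  MvPolynomial.homogeneousSubmodule (Fin 2) ℝ r ⊓ LinearMap.ker (rhoStar + LinearMap.id)

/-!
Let `ω` be a primitive cube root of unity. The point `(ω, 1)` is an eigenvector, with eigenvalue
`-ω`, of the linear map underlying `ρ*`, so for odd `n` evaluation at `(ω, 1)` kills `W n` unless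
`3 ∣ n`. If `3 ∣ n`, it maps `W n` onto `ℂ`: since `ρ*³ = -1` in odd degree, `f - ρ*f + ρ*²f` lies
in `W n`, and its value is three times that of `f`. A form over `ℝ` vanishing at `(ω, 1)` is
divisible by the homogenized minimal polynomial `x² + xy + y²` of `ω`, which `ρ*` fixes, so the
kernel of the evaluation on `W (n + 2)` is a copy of `W n`. Hence the dimension starts from
`W 1 = 0`, grows by two at each odd multiple of three and is constant in between.
-/

namespace BinaryForm

lemma aeval_smul_of_isHomogeneous {σ R A : Type*} [CommSemiring R] [CommSemiring A] [Algebra R A]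
    {f : MvPolynomial σ R} {n : ℕ} (hf : f.IsHomogeneous n) (c : A) (v : σ → A) :
    aeval (c • v) f = c ^ n * aeval v f := by
  simp only [aeval_def, eval₂_eq, Finset.mul_sum]
  refine Finset.sum_congr rfl fun d hd => ?_
  have hdeg : ∑ i ∈ d.support, d i = n := (hf.degree_eq_sum_deg_support hd).symm
  simp only [Pi.smul_apply, smul_eq_mul, mul_pow, Finset.prod_mul_distrib,
    Finset.prod_pow_eq_pow_sum, hdeg]
  ring

lemma natDegree_aeval_X_one_le {R : Type*} [CommSemiring R] {f : MvPolynomial (Fin 2) R} {n : ℕ}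
    (hf : f.IsHomogeneous n) : (aeval ![Polynomial.X, (1 : Polynomial R)] f).natDegree ≤ n := by
  have hdeg : ∀ i, (![Polynomial.X, (1 : Polynomial R)] i).natDegree ≤ 1 := by
    simp [Fin.forall_fin_two, Polynomial.natDegree_X_le]
  simpa using aeval_natDegree_le f hf.totalDegree_le _ hdeg

section Minpoly

variable {K A : Type*} [Field K] [CommRing A] [Algebra K A] {z : A} {n : ℕ}
  {f : MvPolynomial (Fin 2) K}

lemma minpoly_dvd_aeval_X_one (hz : aeval ![z, 1] f = 0) :
    minpoly K z ∣ aeval ![Polynomial.X, (1 : Polynomial K)] f := by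
  apply minpoly.dvd
  rw [← hz, comp_aeval_apply]
  congr 2
  ext i
  fin_cases i <;> simp

lemma eq_zero_of_degree_lt_natDegree_minpoly (hf : f.IsHomogeneous n)
    (hn : n < (minpoly K z).natDegree) (hz : aeval ![z, 1] f = 0) : f = 0 := by
  have hp : aeval ![Polynomial.X, (1 : Polynomial K)] f = 0 :=
    Polynomial.eq_zero_of_dvd_of_natDegree_lt (minpoly_dvd_aeval_X_one hz)
      ((natDegree_aeval_X_one_le hf).trans_lt hn)
  rw [← Polynomial.homogenize_eq_of_isHomogeneous hf hp, Polynomial.homogenize_zero]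

lemma exists_eq_homogenize_minpoly_mul (hf : f.IsHomogeneous ((minpoly K z).natDegree + n))
    (hz : aeval ![z, 1] f = 0) :
    ∃ g : MvPolynomial (Fin 2) K, g.IsHomogeneous n ∧
      f = (minpoly K z).homogenize (minpoly K z).natDegree * g := by
  obtain ⟨s, hs⟩ := minpoly_dvd_aeval_X_one hz
  have hf_eq := Polynomial.homogenize_eq_of_isHomogeneous hf hs
  rcases eq_or_ne (minpoly K z * s) 0 with h0 | h0
  · exact ⟨0, isHomogeneous_zero _ _ n, by rw [← hf_eq, h0, Polynomial.homogenize_zero, mul_zero]⟩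
  · have hdeg : s.natDegree ≤ n := by
      have := natDegree_aeval_X_one_le hf
      rw [hs, Polynomial.natDegree_mul (left_ne_zero_of_mul h0) (right_ne_zero_of_mul h0)] at this
      exact Nat.le_of_add_le_add_left this
    exact ⟨s.homogenize n, Polynomial.isHomogeneous_homogenize s,
      by rw [← hf_eq, Polynomial.homogenize_mul _ _ le_rfl hdeg]⟩

end Minpoly

end BinaryForm

section CubeRoot

lemma sq_add_self_add_one_eq_zero_of_isPrimitiveRoot {R : Type*} [CommRing R] [IsDomain R] {ω : R}
    (hω : IsPrimitiveRoot ω 3) : ω ^ 2 + ω + 1 = 0 := by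
  have h := hω.geom_sum_eq_zero (by decide)
  simp only [Finset.sum_range_succ, Finset.sum_range_zero] at h
  linear_combination h

variable {ω : ℂ}

lemma im_ne_zero_of_isPrimitiveRoot_three (hω : IsPrimitiveRoot ω 3) : ω.im ≠ 0 := by
  intro him
  have hre := congrArg Complex.re (sq_add_self_add_one_eq_zero_of_isPrimitiveRoot hω)
  simp only [pow_two, Complex.add_re, Complex.mul_re, him, Complex.one_re, Complex.zero_re] at hre
  nlinarith [sq_nonneg (2 * ω.re + 1)]

lemma minpoly_real_of_isPrimitiveRoot_three (hω : IsPrimitiveRoot ω 3) :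
    minpoly ℝ ω = Polynomial.X ^ 2 + Polynomial.X + 1 := by
  have hdeg : (Polynomial.X ^ 2 + Polynomial.X + 1 : Polynomial ℝ).natDegree = 2 := by
    compute_degree!
  have hmonic : (Polynomial.X ^ 2 + Polynomial.X + 1 : Polynomial ℝ).Monic := by monicity!
  have hint : IsIntegral ℝ ω := Algebra.IsIntegral.isIntegral ω
  have hnotReal : ω ∉ (algebraMap ℝ ℂ).range := by
    rintro ⟨x, rfl⟩
    exact im_ne_zero_of_isPrimitiveRoot_three hω (Complex.ofReal_im x)
  refine (minpoly.unique_of_degree_le_degree_minpoly ℝ ω hmonic ?_ ?_).symm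
  · simpa using sq_add_self_add_one_eq_zero_of_isPrimitiveRoot hω
  · rw [Polynomial.degree_eq_natDegree hmonic.ne_zero,
      Polynomial.degree_eq_natDegree (minpoly.ne_zero hint), hdeg]
    exact_mod_cast (minpoly.two_le_natDegree_iff hint).mpr hnotReal

lemma natDegree_minpoly_real_of_isPrimitiveRoot_three (hω : IsPrimitiveRoot ω 3) :
    (minpoly ℝ ω).natDegree = 2 := by
  rw [minpoly_real_of_isPrimitiveRoot_three hω]
  compute_degree!

lemma exists_isHomogeneous_aeval_eq_of_im_ne_zero (hω : ω.im ≠ 0) {n : ℕ} (hn : n ≠ 0) (w : ℂ) :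
    ∃ f : MvPolynomial (Fin 2) ℝ, f.IsHomogeneous n ∧ aeval ![ω, 1] f = w := by
  let a : ℝ := w.im / ω.im
  let p : Polynomial ℝ := .C a * .X + .C (w.re - a * ω.re)
  have hdeg : p.natDegree ≤ n :=
    Polynomial.natDegree_linear_le.trans (Nat.one_le_iff_ne_zero.mpr hn)
  refine ⟨p.homogenize n, Polynomial.isHomogeneous_homogenize p, ?_⟩
  rw [Polynomial.aeval_homogenize_of_eq_one hdeg _ rfl]
  apply Complex.ext <;> simp [p, a, hω]

end CubeRoot

section RhoStar

lemma rhoStar_mul (f g : MvPolynomial (Fin 2) ℝ) : rhoStar (f * g) = rhoStar f * rhoStar g :=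
  map_mul (aeval (R := ℝ) _) f g

lemma aeval_rhoStar {A : Type*} [CommRing A] [Algebra ℝ A] (v : Fin 2 → A)
    (f : MvPolynomial (Fin 2) ℝ) : aeval v (rhoStar f) = aeval ![v 0 + v 1, -v 0] f := by
  rw [rhoStar, AlgHom.toLinearMap_apply, comp_aeval_apply]
  congr 2
  ext i
  fin_cases i <;> simp

variable {n : ℕ} {f : MvPolynomial (Fin 2) ℝ}

lemma isHomogeneous_rhoStar (hf : f.IsHomogeneous n) : (rhoStar f).IsHomogeneous n := by
  have hlin : ∀ i, (![X 0 + X 1, -X 0] i : MvPolynomial (Fin 2) ℝ).IsHomogeneous 1 :=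
    Fin.forall_fin_two.mpr
      ⟨(isHomogeneous_X ℝ 0).add (isHomogeneous_X ℝ 1), (isHomogeneous_X ℝ 0).neg⟩
  have hcomp := hf.aeval _ hlin
  rwa [one_mul] at hcomp

lemma rhoStar_rhoStar_rhoStar (hf : f.IsHomogeneous n) :
    rhoStar (rhoStar (rhoStar f)) = (-1) ^ n * f := by
  have hneg : aeval ((-1 : MvPolynomial (Fin 2) ℝ) • X) f = (-1) ^ n * f := by
    rw [BinaryForm.aeval_smul_of_isHomogeneous hf, aeval_X_left_apply]
  rw [← hneg, ← aeval_X_left_apply (rhoStar (rhoStar (rhoStar f))), aeval_rhoStar, aeval_rhoStar,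
    aeval_rhoStar]
  congr 2
  ext i : 1
  fin_cases i <;> simp

lemma aeval_root_rhoStar {A : Type*} [CommRing A] [IsDomain A] [Algebra ℝ A] {ω : A}
    (hω : IsPrimitiveRoot ω 3) (hf : f.IsHomogeneous n) :
    aeval ![ω, 1] (rhoStar f) = (-ω) ^ n * aeval ![ω, 1] f := by
  have heigen : ![ω + 1, -ω] = -ω • ![ω, 1] := by
    ext i
    fin_cases i
    · simpa using by linear_combination sq_add_self_add_one_eq_zero_of_isPrimitiveRoot hω
    · simp
  rw [aeval_rhoStar, ← BinaryForm.aeval_smul_of_isHomogeneous hf, ← heigen]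
  simp

end RhoStar

/-- The binary form `x² + xy + y²`. It is the homogenized minimal polynomial of a primitive cube
root of unity and is fixed by `ρ*`. -/
noncomputable def invariantForm : MvPolynomial (Fin 2) ℝ := X 0 ^ 2 + X 0 * X 1 + X 1 ^ 2

lemma homogenize_minpoly_eq_invariantForm {ω : ℂ} (hω : IsPrimitiveRoot ω 3) :
    (minpoly ℝ ω).homogenize 2 = invariantForm := by
  simp [minpoly_real_of_isPrimitiveRoot_three hω, invariantForm]

lemma isHomogeneous_invariantForm : invariantForm.IsHomogeneous 2 :=
  (((isHomogeneous_X ℝ 0).pow 2).add ((isHomogeneous_X ℝ 0).mul (isHomogeneous_X ℝ 1))).add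
    ((isHomogeneous_X ℝ 1).pow 2)

lemma invariantForm_ne_zero : invariantForm ≠ 0 := by
  intro h
  simpa [invariantForm] using congrArg (eval ![1, 0]) h

lemma rhoStar_invariantForm : rhoStar invariantForm = invariantForm := by
  simp only [rhoStar, invariantForm, AlgHom.toLinearMap_apply, map_add, map_mul, map_pow, aeval_X,
    Matrix.cons_val_zero, Matrix.cons_val_one]
  ring

lemma aeval_root_invariantForm {A : Type*} [CommRing A] [IsDomain A] [Algebra ℝ A] {ω : A}
    (hω : IsPrimitiveRoot ω 3) : aeval ![ω, 1] invariantForm = 0 := by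
  simpa [invariantForm] using sq_add_self_add_one_eq_zero_of_isPrimitiveRoot hω

section W

variable {n : ℕ} {f g : MvPolynomial (Fin 2) ℝ} {ω : ℂ}

lemma mem_W : f ∈ W n ↔ f.IsHomogeneous n ∧ rhoStar f = -f := by
  simp [W, eq_neg_iff_add_eq_zero]

instance finiteDimensional_W (n : ℕ) : FiniteDimensional ℝ (W n) :=
  have : FiniteDimensional ℝ (homogeneousSubmodule (Fin 2) ℝ n) :=
    Module.Finite.iff_fg.mpr (homogeneousSubmodule_fg _ _ n)
  Submodule.finiteDimensional_of_le inf_le_left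

lemma invariantForm_mul_mem_W_iff (hg : g.IsHomogeneous n) :
    invariantForm * g ∈ W (n + 2) ↔ g ∈ W n := by
  have hhom : (invariantForm * g).IsHomogeneous (n + 2) :=
    add_comm 2 n ▸ isHomogeneous_invariantForm.mul hg
  rw [mem_W, mem_W, rhoStar_mul, rhoStar_invariantForm, ← mul_neg,
    mul_right_inj' invariantForm_ne_zero, and_iff_right hhom, and_iff_right hg]

lemma sub_rhoStar_add_rhoStar_rhoStar_mem_W (hn : Odd n) (hf : f.IsHomogeneous n) :
    f - rhoStar f + rhoStar (rhoStar f) ∈ W n := by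
  have hf₁ := isHomogeneous_rhoStar hf
  refine mem_W.mpr ⟨(hf.sub hf₁).add (isHomogeneous_rhoStar hf₁), ?_⟩
  rw [map_add, map_sub, rhoStar_rhoStar_rhoStar hf, hn.neg_one_pow]
  ring

lemma aeval_root_eq_zero_of_mem_W {A : Type*} [CommRing A] [IsDomain A] [Algebra ℝ A] {ω : A}
    (hω : IsPrimitiveRoot ω 3) (hn : Odd n) (h3 : ¬3 ∣ n) (hf : f ∈ W n) : aeval ![ω, 1] f = 0 := by
  obtain ⟨hhom, hanti⟩ := mem_W.mp hf
  have heval := aeval_root_rhoStar hω hhom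
  rw [hanti, map_neg, hn.neg_pow, neg_mul, neg_inj] at heval
  exact (mul_left_eq_self₀.mp heval.symm).resolve_left (mt (hω.pow_eq_one_iff_dvd n).mp h3)

lemma exists_mem_W_aeval_root_eq (hω : IsPrimitiveRoot ω 3) (hn : Odd n) (h3 : 3 ∣ n) (w : ℂ) :
    ∃ f ∈ W n, aeval ![ω, 1] f = w := by
  obtain ⟨f, hf, hfw⟩ := exists_isHomogeneous_aeval_eq_of_im_ne_zero
    (im_ne_zero_of_isPrimitiveRoot_three hω) hn.pos.ne' (w / 3)
  refine ⟨_, sub_rhoStar_add_rhoStar_rhoStar_mem_W hn hf, ?_⟩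
  have hpow : (-ω) ^ n = -1 := by rw [hn.neg_pow, (hω.pow_eq_one_iff_dvd n).mpr h3]
  rw [map_add, map_sub, aeval_root_rhoStar hω (isHomogeneous_rhoStar hf),
    aeval_root_rhoStar hω hf, hfw, hpow]
  ring

/-- Evaluation of the forms in `W n` at the point `(ω, 1)`. -/
noncomputable def evalW (ω : ℂ) (n : ℕ) : W n →ₗ[ℝ] ℂ :=
  (aeval ![ω, 1]).toLinearMap.domRestrict (W n)

/-- Multiplication by `x² + xy + y²`, as a linear map from `W n` to `W (n + 2)`. -/
noncomputable def mulInvariantForm (n : ℕ) : W n →ₗ[ℝ] W (n + 2) :=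
  (LinearMap.mulLeft ℝ invariantForm).restrict fun _ hg =>
    (invariantForm_mul_mem_W_iff (mem_W.mp hg).1).mpr hg

lemma mulInvariantForm_injective (n : ℕ) : Function.Injective (mulInvariantForm n) := fun _ _ h =>
  Subtype.ext (mul_left_cancel₀ invariantForm_ne_zero (congrArg Subtype.val h))

lemma range_mulInvariantForm (hω : IsPrimitiveRoot ω 3) (n : ℕ) :
    LinearMap.range (mulInvariantForm n) = LinearMap.ker (evalW ω (n + 2)) := by
  ext ⟨f, hf⟩
  constructor
  · rintro ⟨g, hg⟩
    have hfg : invariantForm * g.1 = f := congrArg Subtype.val hg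
    change aeval ![ω, 1] f = 0
    rw [← hfg, map_mul, aeval_root_invariantForm hω, zero_mul]
  · intro (hker : aeval ![ω, 1] f = 0)
    have hdeg := natDegree_minpoly_real_of_isPrimitiveRoot_three hω
    have hhom : f.IsHomogeneous ((minpoly ℝ ω).natDegree + n) := by
      rw [hdeg, add_comm]
      exact (mem_W.mp hf).1
    obtain ⟨g, hg, hfg⟩ := BinaryForm.exists_eq_homogenize_minpoly_mul hhom hker
    rw [hdeg, homogenize_minpoly_eq_invariantForm hω] at hfg
    subst hfg
    exact ⟨⟨g, (invariantForm_mul_mem_W_iff hg).mp hf⟩, rfl⟩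

lemma finrank_W_add_two (hω : IsPrimitiveRoot ω 3) (n : ℕ) :
    Module.finrank ℝ (W (n + 2)) =
      Module.finrank ℝ (LinearMap.range (evalW ω (n + 2))) + Module.finrank ℝ (W n) := by
  rw [← (evalW ω (n + 2)).finrank_range_add_finrank_ker, ← range_mulInvariantForm hω,
    LinearMap.finrank_range_of_inj (mulInvariantForm_injective n)]

lemma range_evalW_eq_bot (hω : IsPrimitiveRoot ω 3) (hn : Odd n) (h3 : ¬3 ∣ n) :
    LinearMap.range (evalW ω n) = ⊥ :=
  LinearMap.range_eq_bot.mpr <| LinearMap.ext fun f =>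
    aeval_root_eq_zero_of_mem_W hω hn h3 f.2

lemma range_evalW_eq_top (hω : IsPrimitiveRoot ω 3) (hn : Odd n) (h3 : 3 ∣ n) :
    LinearMap.range (evalW ω n) = ⊤ := by
  refine LinearMap.range_eq_top.mpr fun w => ?_
  obtain ⟨f, hf, hfw⟩ := exists_mem_W_aeval_root_eq hω hn h3 w
  exact ⟨⟨f, hf⟩, hfw⟩

lemma W_one_eq_bot : W 1 = ⊥ := by
  have hω := Complex.isPrimitiveRoot_exp 3 (by decide)
  refine (Submodule.eq_bot_iff _).mpr fun f hf => ?_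
  refine BinaryForm.eq_zero_of_degree_lt_natDegree_minpoly (mem_W.mp hf).1 ?_
    (aeval_root_eq_zero_of_mem_W hω (by decide) (by decide) hf)
  rw [natDegree_minpoly_real_of_isPrimitiveRoot_three hω]
  exact one_lt_two

theorem finrank_W_two_mul_add_one (k : ℕ) :
    Module.finrank ℝ (W (2 * k + 1)) = 2 * ((k + 2) / 3) := by
  have hω := Complex.isPrimitiveRoot_exp 3 (by decide)
  induction k with
  | zero => simp [W_one_eq_bot]
  | succ k ih =>
    have hodd : Odd (2 * k + 1 + 2) := ⟨k + 1, by ring⟩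
    rw [show 2 * (k + 1) + 1 = 2 * k + 1 + 2 by ring, finrank_W_add_two hω, ih]
    by_cases h3 : 3 ∣ 2 * k + 1 + 2
    · rw [range_evalW_eq_top hω hodd h3, finrank_top, Complex.finrank_real_complex]
      omega
    · have hk : k % 3 ≠ 0 := by omega
      rw [range_evalW_eq_bot hω hodd h3, finrank_bot]
      omega

end W

/-- For odd `r`, the dimension of `W = {f ∈ V : f(x+y,-x) = -f(x,y)}` equals
`(r-1)/3` if `r ≡ 1 (mod 6)`, `(r+3)/3` if `r ≡ 3 (mod 6)`, and `(r+1)/3` if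
`r ≡ 5 (mod 6)`. -/
theorem dim_W (r : ℕ) (hr : Odd r) :
    (r % 6 = 1 → Module.finrank ℝ ↥(W r) = (r - 1) / 3) ∧
    (r % 6 = 3 → Module.finrank ℝ ↥(W r) = (r + 3) / 3) ∧
    (r % 6 = 5 → Module.finrank ℝ ↥(W r) = (r + 1) / 3) := by
  obtain ⟨k, rfl⟩ := hr
  rw [finrank_W_two_mul_add_one k]
  refine ⟨fun h => ?_, fun h => ?_, fun h => ?_⟩ <;> omega
end

section
/- Let r be an even natural number. Then the dimension over ℝ of the eigenspace of Φ for the eigenvalue 1 is at least (r−6)/6, (r+4)/6, (r+2)/6, r/6, (r−2)/6, (r+8)/6 according as r ≡ 0, 2, 4, 6, 8, 10 (mod 12); and the dimension of the eigenspace of Φ for the eigenvalue −1 is at least r/6, (r−2)/6, (r+8)/6, (r−6)/6, (r+4)/6, (r+2)/6 according as r ≡ 0, 2, 4, 6, 8, 10 (mod 12). -/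
open MvPolynomial

/-- The substitution `(σ* f)(x,y) = f(x+y, y)` as a linear endomorphism of the
polynomial ring `ℝ[x,y]`. -/
noncomputable def sigmaStar : MvPolynomial (Fin 2) ℝ →ₗ[ℝ] MvPolynomial (Fin 2) ℝ :=
  (aeval ![X 0 + X 1, X 1]).toLinearMap

/-- The substitution `(τ* f)(x,y) = f(x, x+y)` as a linear endomorphism of the
polynomial ring `ℝ[x,y]`. -/
noncomputable def tauStar : MvPolynomial (Fin 2) ℝ →ₗ[ℝ] MvPolynomial (Fin 2) ℝ :=
  (aeval ![X 0, X 0 + X 1]).toLinearMap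

/-- The operator `Φ : f(x,y) ↦ f(x+y, y) + f(x, x+y)`.  It preserves the space of
homogeneous polynomials of each degree `r`. -/
noncomputable def Phi : MvPolynomial (Fin 2) ℝ →ₗ[ℝ] MvPolynomial (Fin 2) ℝ :=
  sigmaStar + tauStar

/-- The eigenspace of `Φ` for the eigenvalue `1`, inside the space `V` of homogeneous
polynomials of degree `r`: `{f ∈ V : Φ f = f}`. -/
noncomputable def eigPlus (r : ℕ) : Submodule ℝ (MvPolynomial (Fin 2) ℝ) :=
  MvPolynomial.homogeneousSubmodule (Fin 2) ℝ r ⊓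
    LinearMap.ker (Phi - LinearMap.id)

/-- The eigenspace of `Φ` for the eigenvalue `-1`, inside the space `V` of homogeneous
polynomials of degree `r`: `{f ∈ V : Φ f = -f}`. -/
noncomputable def eigMinus (r : ℕ) : Submodule ℝ (MvPolynomial (Fin 2) ℝ) :=
  MvPolynomial.homogeneousSubmodule (Fin 2) ℝ r ⊓
    LinearMap.ker (Phi + LinearMap.id)

/-!
Let `S f = f(-y, x)` and `U f = f(x + y, -x)`. Then `Φ = (U + U²) S`, so `Φ = ±1` on
`ker (S ± 1) ∩ ker (1 + U + U²)`, and it suffices to bound these two kernels from below in the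
`(r + 1)`-dimensional space of forms of degree `r`.

On forms of even degree `S² = 1` and `U³ = 1`. Each of the operators `T = S - ε` (`ε = ±1`) and
`T = 1 + U + U²` commutes with multiplication by an invariant quadratic form `q`, namely
`x² + y²` or `x² + xy + y²`, so `q · ker T` is contained in `ker T` two degrees higher. All its
elements vanish at the complex zero `(1, ζ)` of `q`. The complementary factor `S + ε` or `U - 1` of
`S² - 1` or `U³ - 1` takes values in `ker T`, and since `(1, ζ)` is an eigenvector of the
substitution, the factor scales values at `(1, ζ)` by a constant. Whenever that constant is
nonzero, the values at `(1, ζ)` fill `ℂ`, and the dimension of `ker T` grows by at least `2`.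
-/

open Module

section LinearAlgebra

variable {K V : Type*} [Field K] [AddCommGroup V] [Module K V]

theorem finrank_add_finrank_le_finrank_inf_add {W₁ W₂ W : Submodule K V} [FiniteDimensional K W]
    (h₁ : W₁ ≤ W) (h₂ : W₂ ≤ W) :
    finrank K W₁ + finrank K W₂ ≤ finrank K ↥(W₁ ⊓ W₂) + finrank K W := by
  have := Submodule.finiteDimensional_of_le h₁
  have := Submodule.finiteDimensional_of_le h₂
  rw [← Submodule.finrank_sup_add_finrank_inf_eq, add_comm]
  gcongr
  exact Submodule.finrank_mono (sup_le h₁ h₂)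

theorem finrank_le_of_map_le {V' : Type*} [AddCommGroup V'] [Module K V'] {A : Submodule K V}
    {B : Submodule K V'} [FiniteDimensional K B] {μ : V →ₗ[K] V'} (hμ : Function.Injective μ)
    (hAB : A.map μ ≤ B) : finrank K A ≤ finrank K B :=
  (A.equivMapOfInjective μ hμ).finrank_eq.trans_le (Submodule.finrank_mono hAB)

theorem finrank_map_add_finrank_inf_ker {E : Type*} [AddCommGroup E] [Module K E]
    (B : Submodule K V) [FiniteDimensional K B] (φ : V →ₗ[K] E) :
    finrank K (B.map φ) + finrank K ↥(B ⊓ LinearMap.ker φ) = finrank K B := by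
  rw [← (φ.domRestrict B).finrank_range_add_finrank_ker, LinearMap.range_domRestrict,
    LinearMap.ker_domRestrict, ← Submodule.map_comap_subtype, Submodule.finrank_map_subtype_eq]

end LinearAlgebra

section Homogeneous

variable {σ R S : Type*} [CommSemiring R] [CommSemiring S] [Algebra R S]

theorem aeval_smul_of_isHomogeneous {f : MvPolynomial σ R} {n : ℕ} (hf : f.IsHomogeneous n)
    (c : S) (z : σ → S) : aeval (c • z) f = c ^ n * aeval z f := by
  rw [aeval_def, aeval_def, eval₂_eq, eval₂_eq, Finset.mul_sum]
  refine Finset.sum_congr rfl fun e he => ?_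
  have hdeg : ∑ i ∈ e.support, e i = n := by
    rw [← Finsupp.degree_apply, Finsupp.degree_eq_weight_one]
    exact hf (mem_support_iff.1 he)
  simp only [Pi.smul_apply, smul_eq_mul, mul_pow, Finset.prod_mul_distrib,
    Finset.prod_pow_eq_pow_sum, hdeg]
  ring

theorem aeval_aeval_of_isHomogeneous {f : MvPolynomial σ R} {n : ℕ} (hf : f.IsHomogeneous n)
    {v : σ → MvPolynomial σ R} {z : σ → S} {c : S} (hz : ∀ i, aeval z (v i) = c * z i) :
    aeval z (aeval v f) = c ^ n * aeval z f := by
  rw [← aeval_smul_of_isHomogeneous hf, ← AlgHom.comp_apply]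
  congr 1
  ext i
  simp [hz]

theorem aeval_neg_X_of_even {A : Type*} [CommRing A] {f : MvPolynomial σ A} {n : ℕ}
    (hf : f.IsHomogeneous n) (hn : Even n) : aeval (-X) f = f := by
  have h := aeval_smul_of_isHomogeneous hf (-1 : MvPolynomial σ A) X
  rwa [neg_one_smul, hn.neg_one_pow, one_mul, aeval_X_left_apply] at h

end Homogeneous

section HomogeneousKer

variable {σ K : Type*} [Field K]

instance finiteDimensional_homogeneousSubmodule [Finite σ] (n : ℕ) :
    FiniteDimensional K (homogeneousSubmodule σ K n) :=
  Module.Finite.of_fg (homogeneousSubmodule_fg σ K n)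

theorem finrank_homogeneousSubmodule [Fintype σ] (n : ℕ) :
    finrank K (homogeneousSubmodule σ K n) = (Fintype.card σ).multichoose n := by
  classical
  have hdeg : {d : σ →₀ ℕ | d.degree = n} = (Finset.univ.finsuppAntidiag n : Finset (σ →₀ ℕ)) := by
    ext d
    simp [Finsupp.degree_eq_sum]
  rw [homogeneousSubmodule_eq_finsupp_supported, hdeg,
    (AddMonoidAlgebra.supportedEquivFinsupp _).finrank_eq, finrank_finsupp_self]
  simp [Finset.card_finsuppAntidiag_nat_eq_multichoose]

/-- The space of homogeneous polynomials of degree `n` in the kernel of `T`. The operator `T` is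
not required to preserve the degree. -/
noncomputable def homogeneousKer (T : MvPolynomial σ K →ₗ[K] MvPolynomial σ K) (n : ℕ) :
    Submodule K (MvPolynomial σ K) :=
  homogeneousSubmodule σ K n ⊓ LinearMap.ker T

theorem homogeneousKer_le (T : MvPolynomial σ K →ₗ[K] MvPolynomial σ K) (n : ℕ) :
    homogeneousKer T n ≤ homogeneousSubmodule σ K n :=
  inf_le_left

instance finiteDimensional_homogeneousKer [Finite σ]
    (T : MvPolynomial σ K →ₗ[K] MvPolynomial σ K) (n : ℕ) :
    FiniteDimensional K (homogeneousKer T n) :=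
  Submodule.finiteDimensional_of_le (homogeneousKer_le T n)

variable {T : MvPolynomial σ K →ₗ[K] MvPolynomial σ K} {q : MvPolynomial σ K} {d : ℕ}

theorem map_mulLeft_homogeneousKer_le (hq : q.IsHomogeneous d)
    (hT : ∀ f, T (q * f) = q * T f) (n : ℕ) :
    (homogeneousKer T n).map (LinearMap.mulLeft K q) ≤ homogeneousKer T (n + d) := by
  rintro _ ⟨f, ⟨hf, hTf : T f = 0⟩, rfl⟩
  refine ⟨?_, ?_⟩
  · rw [add_comm]
    exact hq.mul hf
  · simp [hT, hTf]

variable [Finite σ]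

theorem finrank_homogeneousKer_le_add (hq0 : q ≠ 0) (hq : q.IsHomogeneous d)
    (hT : ∀ f, T (q * f) = q * T f) (n : ℕ) :
    finrank K (homogeneousKer T n) ≤ finrank K (homogeneousKer T (n + d)) :=
  finrank_le_of_map_le (mul_right_injective₀ hq0) (map_mulLeft_homogeneousKer_le hq hT n)

theorem finrank_homogeneousKer_add_finrank_map_le {E : Type*} [AddCommGroup E] [Module K E]
    (hq0 : q ≠ 0) (hq : q.IsHomogeneous d) (hT : ∀ f, T (q * f) = q * T f)
    {φ : MvPolynomial σ K →ₗ[K] E} (hφ : ∀ f, φ (q * f) = 0) (n : ℕ) :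
    finrank K (homogeneousKer T n) + finrank K ((homogeneousKer T (n + d)).map φ) ≤
      finrank K (homogeneousKer T (n + d)) := by
  have := Submodule.finiteDimensional_of_le
    (inf_le_left : homogeneousKer T (n + d) ⊓ LinearMap.ker φ ≤ _)
  rw [← finrank_map_add_finrank_inf_ker (homogeneousKer T (n + d)) φ, add_comm]
  gcongr
  refine finrank_le_of_map_le (mul_right_injective₀ hq0)
    (le_inf (map_mulLeft_homogeneousKer_le hq hT n) ?_)
  rintro _ ⟨f, -, rfl⟩
  exact hφ f

end HomogeneousKer

section BinaryForms

theorem map_aeval_homogeneousSubmodule_eq_top {ζ : ℂ} (hζ : ζ.im ≠ 0) {n : ℕ} (hn : n ≠ 0) :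
    (homogeneousSubmodule (Fin 2) ℝ n).map (aeval ![1, ζ]).toLinearMap = ⊤ := by
  obtain ⟨k, rfl⟩ := Nat.exists_eq_succ_of_ne_zero hn
  refine eq_top_iff.2 fun w _ => ?_
  let b := w.im / ζ.im
  refine ⟨C (w.re - b * ζ.re) * X 0 ^ (k + 1) + C b * (X 0 ^ k * X 1), ?_, ?_⟩
  · exact (isHomogeneous_C_mul_X_pow _ _ _).add
      (((isHomogeneous_X_pow 0 k).mul (isHomogeneous_X ℝ 1)).C_mul b)
  · apply Complex.ext <;> simp [b, hζ]

theorem finrank_homogeneousKer_add_two_le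
    {T : MvPolynomial (Fin 2) ℝ →ₗ[ℝ] MvPolynomial (Fin 2) ℝ}
    {Q : MvPolynomial (Fin 2) ℝ → MvPolynomial (Fin 2) ℝ} {q : MvPolynomial (Fin 2) ℝ}
    {n d : ℕ} {ζ c : ℂ} (hnd : n + d ≠ 0) (hq0 : q ≠ 0) (hq : q.IsHomogeneous d)
    (hT : ∀ f, T (q * f) = q * T f) (hζ : ζ.im ≠ 0) (hqζ : aeval ![1, ζ] q = 0)
    (hQ : ∀ g, g.IsHomogeneous (n + d) → Q g ∈ homogeneousKer T (n + d)) (hc : c ≠ 0)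
    (hQζ : ∀ g, g.IsHomogeneous (n + d) → aeval ![1, ζ] (Q g) = c * aeval ![1, ζ] g) :
    finrank ℝ (homogeneousKer T n) + 2 ≤ finrank ℝ (homogeneousKer T (n + d)) := by
  have hsurj : (homogeneousKer T (n + d)).map (aeval ![1, ζ]).toLinearMap = ⊤ := by
    refine eq_top_iff.2 fun w _ => ?_
    obtain ⟨g, hg, hgw⟩ : c⁻¹ * w ∈
        (homogeneousSubmodule (Fin 2) ℝ (n + d)).map (aeval ![1, ζ]).toLinearMap := by
      simp [map_aeval_homogeneousSubmodule_eq_top hζ hnd]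
    refine ⟨Q g, hQ g hg, ?_⟩
    rw [AlgHom.toLinearMap_apply] at hgw ⊢
    rw [hQζ g hg, hgw, mul_inv_cancel_left₀ hc]
  have hrank := finrank_homogeneousKer_add_finrank_map_le hq0 hq hT
    (φ := (aeval ![1, ζ]).toLinearMap) (by simp [hqζ]) n
  rwa [hsurj, finrank_top, Complex.finrank_real_complex] at hrank

end BinaryForms

section QuarterTurn

/-- The substitution `f(x, y) ↦ f(-y, x)`: the standard generator `S` of `SL₂(ℤ)`, of order `4`,
acting on polynomials. -/
noncomputable def quarterTurn : MvPolynomial (Fin 2) ℝ →ₐ[ℝ] MvPolynomial (Fin 2) ℝ :=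
  aeval ![-X 1, X 0]

@[simp] theorem quarterTurn_X_zero : quarterTurn (X 0) = -X 1 := by simp [quarterTurn]

@[simp] theorem quarterTurn_X_one : quarterTurn (X 1) = X 0 := by simp [quarterTurn]

variable {f : MvPolynomial (Fin 2) ℝ} {n : ℕ}

theorem isHomogeneous_quarterTurn (hf : f.IsHomogeneous n) :
    (quarterTurn f).IsHomogeneous n := by
  have hX : ∀ i, (![-X 1, X 0] i : MvPolynomial (Fin 2) ℝ).IsHomogeneous 1 :=
    Fin.forall_fin_two.2 ⟨(isHomogeneous_X ℝ 1).neg, isHomogeneous_X ℝ 0⟩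
  exact one_mul n ▸ hf.aeval _ hX

theorem quarterTurn_quarterTurn (hf : f.IsHomogeneous n) (hn : Even n) :
    quarterTurn (quarterTurn f) = f := by
  have hsq : quarterTurn.comp quarterTurn = aeval (-X) := by
    ext i : 1
    fin_cases i <;> simp
  rw [← AlgHom.comp_apply, hsq, aeval_neg_X_of_even hf hn]

theorem aeval_quarterTurn (hf : f.IsHomogeneous n) :
    aeval ![1, Complex.I] (quarterTurn f) = (-Complex.I) ^ n * aeval ![1, Complex.I] f :=
  aeval_aeval_of_isHomogeneous hf (by simp [Fin.forall_fin_two])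

/-- The operator `S - ε`, where `S` is `quarterTurn`. -/
noncomputable def quarterTurnSub (ε : ℝ) : MvPolynomial (Fin 2) ℝ →ₗ[ℝ] MvPolynomial (Fin 2) ℝ :=
  quarterTurn.toLinearMap - ε • LinearMap.id

@[simp] theorem quarterTurnSub_apply (ε : ℝ) (f : MvPolynomial (Fin 2) ℝ) :
    quarterTurnSub ε f = quarterTurn f - ε • f :=
  rfl

/-- The forms of degree `n` on which `quarterTurn` acts as the scalar `ε`. -/
noncomputable def quarterTurnEigenspace (ε : ℝ) (n : ℕ) : Submodule ℝ (MvPolynomial (Fin 2) ℝ) :=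
  homogeneousKer (quarterTurnSub ε) n

theorem mem_quarterTurnEigenspace {ε : ℝ} :
    f ∈ quarterTurnEigenspace ε n ↔ f.IsHomogeneous n ∧ quarterTurn f = ε • f := by
  simp [quarterTurnEigenspace, homogeneousKer, sub_eq_zero]

theorem sq_add_sq_ne_zero : (X 0 ^ 2 + X 1 ^ 2 : MvPolynomial (Fin 2) ℝ) ≠ 0 := fun h => by
  simpa using congrArg (eval ![1, 0]) h

theorem isHomogeneous_sq_add_sq :
    (X 0 ^ 2 + X 1 ^ 2 : MvPolynomial (Fin 2) ℝ).IsHomogeneous 2 :=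
  (isHomogeneous_X_pow 0 2).add (isHomogeneous_X_pow 1 2)

theorem quarterTurnSub_sq_add_sq_mul (ε : ℝ) (f : MvPolynomial (Fin 2) ℝ) :
    quarterTurnSub ε ((X 0 ^ 2 + X 1 ^ 2) * f) = (X 0 ^ 2 + X 1 ^ 2) * quarterTurnSub ε f := by
  simp only [quarterTurnSub_apply, map_mul, map_add, map_pow, quarterTurn_X_zero,
    quarterTurn_X_one, smul_eq_C_mul]
  ring

theorem finrank_quarterTurnEigenspace_le_add_two (ε : ℝ) (n : ℕ) :
    finrank ℝ (quarterTurnEigenspace ε n) ≤ finrank ℝ (quarterTurnEigenspace ε (n + 2)) :=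
  finrank_homogeneousKer_le_add sq_add_sq_ne_zero isHomogeneous_sq_add_sq
    (quarterTurnSub_sq_add_sq_mul ε) n

theorem finrank_quarterTurnEigenspace_add_two_le (m : ℕ) :
    finrank ℝ (quarterTurnEigenspace ((-1) ^ (m + 1)) (2 * m)) + 2 ≤
      finrank ℝ (quarterTurnEigenspace ((-1) ^ (m + 1)) (2 * m + 2)) := by
  have heven : Even (2 * m + 2) := ⟨m + 1, by ring⟩
  have hpow : (-Complex.I) ^ (2 * m + 2) = (-1) ^ (m + 1) := by
    rw [← mul_add_one, pow_mul, neg_sq, Complex.I_sq]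
  have hmem (g : MvPolynomial (Fin 2) ℝ) (hg : g.IsHomogeneous (2 * m + 2)) :
      quarterTurn g + (-1 : ℝ) ^ (m + 1) • g ∈
        quarterTurnEigenspace ((-1) ^ (m + 1)) (2 * m + 2) := by
    refine mem_quarterTurnEigenspace.2 ⟨?_, ?_⟩
    · exact (isHomogeneous_quarterTurn hg).add
        (Submodule.smul_mem (homogeneousSubmodule _ _ _) _ hg)
    · simp [quarterTurn_quarterTurn hg heven, smul_add, smul_smul, ← mul_pow, add_comm]
  have hval (g : MvPolynomial (Fin 2) ℝ) (hg : g.IsHomogeneous (2 * m + 2)) :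
      aeval ![1, Complex.I] (quarterTurn g + (-1 : ℝ) ^ (m + 1) • g) =
        2 * (-1) ^ (m + 1) * aeval ![1, Complex.I] g := by
    simp only [map_add, aeval_quarterTurn hg, hpow, map_smul, Complex.real_smul,
      Complex.ofReal_pow, Complex.ofReal_neg, Complex.ofReal_one]
    ring
  exact finrank_homogeneousKer_add_two_le (Q := fun g => quarterTurn g + (-1 : ℝ) ^ (m + 1) • g)
    (by omega) sq_add_sq_ne_zero isHomogeneous_sq_add_sq (quarterTurnSub_sq_add_sq_mul _) (by simp)
    (by simp) hmem (by simp) hval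

theorem le_finrank_quarterTurnEigenspace_neg_one (m : ℕ) :
    2 * ((m + 1) / 2) ≤ finrank ℝ (quarterTurnEigenspace (-1) (2 * m)) := by
  induction m with
  | zero => simp
  | succ m ih =>
    rw [mul_add_one]
    rcases m.even_or_odd with hm | hm
    · have hstep := finrank_quarterTurnEigenspace_add_two_le m
      rw [hm.add_one.neg_one_pow] at hstep
      omega
    · obtain ⟨k, rfl⟩ := hm
      have hstep := finrank_quarterTurnEigenspace_le_add_two (-1) (2 * (2 * k + 1))
      omega

theorem le_finrank_quarterTurnEigenspace_one (m : ℕ) :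
    2 * (m / 2) + 1 ≤ finrank ℝ (quarterTurnEigenspace 1 (2 * m)) := by
  induction m with
  | zero =>
    have : FiniteDimensional ℝ (quarterTurnEigenspace 1 0) := finiteDimensional_homogeneousKer _ _
    have hone : (1 : MvPolynomial (Fin 2) ℝ) ∈ quarterTurnEigenspace 1 0 :=
      mem_quarterTurnEigenspace.2 ⟨isHomogeneous_one _ _, by simp⟩
    exact Submodule.one_le_finrank_iff.2 (Submodule.ne_bot_iff _ |>.2 ⟨1, hone, one_ne_zero⟩)
  | succ m ih =>
    rw [mul_add_one]
    rcases m.even_or_odd with hm | hm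
    · obtain ⟨k, rfl⟩ := hm
      have hstep := finrank_quarterTurnEigenspace_le_add_two 1 (2 * (k + k))
      omega
    · have hstep := finrank_quarterTurnEigenspace_add_two_le m
      rw [hm.add_one.neg_one_pow] at hstep
      omega

end QuarterTurn

section SixthTurn

/-- The substitution `f(x, y) ↦ f(x + y, -x)`: an element `U` of order `6` of `SL₂(ℤ)`, acting on
polynomials. -/
noncomputable def sixthTurn : MvPolynomial (Fin 2) ℝ →ₐ[ℝ] MvPolynomial (Fin 2) ℝ :=
  aeval ![X 0 + X 1, -X 0]

@[simp] theorem sixthTurn_X_zero : sixthTurn (X 0) = X 0 + X 1 := by simp [sixthTurn]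

@[simp] theorem sixthTurn_X_one : sixthTurn (X 1) = -X 0 := by simp [sixthTurn]

variable {f : MvPolynomial (Fin 2) ℝ} {n : ℕ}

theorem isHomogeneous_sixthTurn (hf : f.IsHomogeneous n) : (sixthTurn f).IsHomogeneous n := by
  have hX : ∀ i, (![X 0 + X 1, -X 0] i : MvPolynomial (Fin 2) ℝ).IsHomogeneous 1 :=
    Fin.forall_fin_two.2
      ⟨(isHomogeneous_X ℝ 0).add (isHomogeneous_X ℝ 1), (isHomogeneous_X ℝ 0).neg⟩
  exact one_mul n ▸ hf.aeval _ hX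

theorem sixthTurn_sixthTurn_sixthTurn (hf : f.IsHomogeneous n) (hn : Even n) :
    sixthTurn (sixthTurn (sixthTurn f)) = f := by
  have hcube : (sixthTurn.comp sixthTurn).comp sixthTurn = aeval (-X) := by
    ext i : 1
    fin_cases i <;> simp
  exact (DFunLike.congr_fun hcube f).trans (aeval_neg_X_of_even hf hn)

theorem aeval_sixthTurn {ω : ℂ} (hω : 1 + ω + ω ^ 2 = 0) (hf : f.IsHomogeneous n) :
    aeval ![1, ω] (sixthTurn f) = (1 + ω) ^ n * aeval ![1, ω] f :=
  aeval_aeval_of_isHomogeneous hf (Fin.forall_fin_two.2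
    ⟨by simp, by simpa using by linear_combination -hω⟩)

/-- The operator `1 + U + U²`, where `U` is `sixthTurn`; on forms of even degree, where `U³ = 1`,
it is the trace of the cyclic group generated by `U`. -/
noncomputable def sixthTurnTrace : MvPolynomial (Fin 2) ℝ →ₗ[ℝ] MvPolynomial (Fin 2) ℝ :=
  LinearMap.id + sixthTurn.toLinearMap + (sixthTurn.comp sixthTurn).toLinearMap

@[simp] theorem sixthTurnTrace_apply (f : MvPolynomial (Fin 2) ℝ) :
    sixthTurnTrace f = f + sixthTurn f + sixthTurn (sixthTurn f) :=
  rfl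

/-- The forms `f` of degree `n` with `f + U f + U² f = 0`, where `U` is `sixthTurn`. -/
noncomputable def sixthTurnTraceKer (n : ℕ) : Submodule ℝ (MvPolynomial (Fin 2) ℝ) :=
  homogeneousKer sixthTurnTrace n

theorem mem_sixthTurnTraceKer :
    f ∈ sixthTurnTraceKer n ↔
      f.IsHomogeneous n ∧ f + sixthTurn f + sixthTurn (sixthTurn f) = 0 := by
  simp [sixthTurnTraceKer, homogeneousKer]

theorem sq_add_mul_add_sq_ne_zero :
    (X 0 ^ 2 + X 0 * X 1 + X 1 ^ 2 : MvPolynomial (Fin 2) ℝ) ≠ 0 := fun h => by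
  simpa using congrArg (eval ![1, 0]) h

theorem isHomogeneous_sq_add_mul_add_sq :
    (X 0 ^ 2 + X 0 * X 1 + X 1 ^ 2 : MvPolynomial (Fin 2) ℝ).IsHomogeneous 2 :=
  ((isHomogeneous_X_pow 0 2).add ((isHomogeneous_X ℝ 0).mul (isHomogeneous_X ℝ 1))).add
    (isHomogeneous_X_pow 1 2)

theorem sixthTurnTrace_sq_add_mul_add_sq_mul (f : MvPolynomial (Fin 2) ℝ) :
    sixthTurnTrace ((X 0 ^ 2 + X 0 * X 1 + X 1 ^ 2) * f) =
      (X 0 ^ 2 + X 0 * X 1 + X 1 ^ 2) * sixthTurnTrace f := by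
  simp only [sixthTurnTrace_apply, map_mul, map_add, map_neg, map_pow, sixthTurn_X_zero,
    sixthTurn_X_one]
  ring

theorem im_ne_zero_of_one_add_add_sq_eq_zero {ω : ℂ} (hω : 1 + ω + ω ^ 2 = 0) : ω.im ≠ 0 := by
  intro him
  have hre : 1 + ω.re + ω.re ^ 2 = 0 := by simpa [him, sq] using congrArg Complex.re hω
  nlinarith [sq_nonneg (2 * ω.re + 1)]

theorem finrank_sixthTurnTraceKer_le_add_two (n : ℕ) :
    finrank ℝ (sixthTurnTraceKer n) ≤ finrank ℝ (sixthTurnTraceKer (n + 2)) :=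
  finrank_homogeneousKer_le_add sq_add_mul_add_sq_ne_zero isHomogeneous_sq_add_mul_add_sq
    sixthTurnTrace_sq_add_mul_add_sq_mul n

theorem finrank_sixthTurnTraceKer_add_two_le {m : ℕ} (hm : ¬3 ∣ m + 1) :
    finrank ℝ (sixthTurnTraceKer (2 * m)) + 2 ≤ finrank ℝ (sixthTurnTraceKer (2 * m + 2)) := by
  obtain ⟨ω, hprim⟩ : ∃ ω : ℂ, IsPrimitiveRoot ω 3 :=
    ⟨_, Complex.isPrimitiveRoot_exp 3 (by norm_num)⟩
  have hω : 1 + ω + ω ^ 2 = 0 := by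
    simpa [Finset.sum_range_succ] using hprim.geom_sum_eq_zero (by norm_num)
  have heven : Even (2 * m + 2) := ⟨m + 1, by ring⟩
  have hpow : (1 + ω) ^ (2 * m + 2) = ω ^ (m + 1) := by
    rw [← mul_add_one, pow_mul]
    congr 1
    linear_combination hω
  have hmem (g : MvPolynomial (Fin 2) ℝ) (hg : g.IsHomogeneous (2 * m + 2)) :
      sixthTurn g - g ∈ sixthTurnTraceKer (2 * m + 2) :=
    mem_sixthTurnTraceKer.2
      ⟨(isHomogeneous_sixthTurn hg).sub hg, by simp [sixthTurn_sixthTurn_sixthTurn hg heven]⟩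
  have hval (g : MvPolynomial (Fin 2) ℝ) (hg : g.IsHomogeneous (2 * m + 2)) :
      aeval ![1, ω] (sixthTurn g - g) = (ω ^ (m + 1) - 1) * aeval ![1, ω] g := by
    rw [map_sub, aeval_sixthTurn hω hg, hpow, sub_one_mul]
  have hscale : ω ^ (m + 1) - 1 ≠ 0 := sub_ne_zero.2 (mt (hprim.pow_eq_one_iff_dvd _).1 hm)
  exact finrank_homogeneousKer_add_two_le (Q := fun g => sixthTurn g - g) (by omega)
    sq_add_mul_add_sq_ne_zero isHomogeneous_sq_add_mul_add_sq
    sixthTurnTrace_sq_add_mul_add_sq_mul (im_ne_zero_of_one_add_add_sq_eq_zero hω)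
    (by simpa using hω) hmem hscale hval

theorem le_finrank_sixthTurnTraceKer (m : ℕ) :
    2 * (m - m / 3) ≤ finrank ℝ (sixthTurnTraceKer (2 * m)) := by
  induction m with
  | zero => simp
  | succ m ih =>
    rw [mul_add_one]
    by_cases hm : 3 ∣ m + 1
    · have hstep := finrank_sixthTurnTraceKer_le_add_two (2 * m)
      omega
    · have hstep := finrank_sixthTurnTraceKer_add_two_le hm
      omega

end SixthTurn

section Phi

theorem sigmaStar_eq_sixthTurn_sixthTurn_quarterTurn (f : MvPolynomial (Fin 2) ℝ) :
    sigmaStar f = sixthTurn (sixthTurn (quarterTurn f)) := by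
  have h : aeval ![X 0 + X 1, X 1] = (sixthTurn.comp sixthTurn).comp quarterTurn := by
    ext i : 1
    fin_cases i <;> simp
  exact DFunLike.congr_fun h f

theorem tauStar_eq_sixthTurn_quarterTurn (f : MvPolynomial (Fin 2) ℝ) :
    tauStar f = sixthTurn (quarterTurn f) := by
  have h : aeval ![X 0, X 0 + X 1] = sixthTurn.comp quarterTurn := by
    ext i : 1
    fin_cases i <;> simp
  exact DFunLike.congr_fun h f

theorem Phi_eq_neg_smul {f : MvPolynomial (Fin 2) ℝ} {ε : ℝ} {n : ℕ}
    (hS : f ∈ quarterTurnEigenspace ε n) (hU : f ∈ sixthTurnTraceKer n) : Phi f = -ε • f := by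
  have hS' := (mem_quarterTurnEigenspace.1 hS).2
  have hU' := (mem_sixthTurnTraceKer.1 hU).2
  calc Phi f = ε • (sixthTurn (sixthTurn f) + sixthTurn f) := by
        simp [Phi, sigmaStar_eq_sixthTurn_sixthTurn_quarterTurn, tauStar_eq_sixthTurn_quarterTurn,
          hS']
    _ = ε • (-f) := by
        congr 1
        linear_combination hU'
    _ = -ε • f := by simp

theorem quarterTurnEigenspace_inf_sixthTurnTraceKer_le_eigPlus (n : ℕ) :
    quarterTurnEigenspace (-1) n ⊓ sixthTurnTraceKer n ≤ eigPlus n := fun f ⟨hS, hU⟩ =>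
  ⟨(mem_sixthTurnTraceKer.1 hU).1, by simp [Phi_eq_neg_smul hS hU]⟩

theorem quarterTurnEigenspace_inf_sixthTurnTraceKer_le_eigMinus (n : ℕ) :
    quarterTurnEigenspace 1 n ⊓ sixthTurnTraceKer n ≤ eigMinus n := fun f ⟨hS, hU⟩ =>
  ⟨(mem_sixthTurnTraceKer.1 hU).1, by simp [Phi_eq_neg_smul hS hU]⟩

theorem finrank_quarterTurnEigenspace_add_finrank_sixthTurnTraceKer_le (ε : ℝ) (n : ℕ) :
    finrank ℝ (quarterTurnEigenspace ε n) + finrank ℝ (sixthTurnTraceKer n) ≤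
      finrank ℝ ↥(quarterTurnEigenspace ε n ⊓ sixthTurnTraceKer n) + (n + 1) := by
  have hdim : finrank ℝ (homogeneousSubmodule (Fin 2) ℝ n) = n + 1 := by
    rw [finrank_homogeneousSubmodule, Fintype.card_fin, Nat.multichoose_two]
  rw [← hdim]
  exact finrank_add_finrank_le_finrank_inf_add (homogeneousKer_le _ n) (homogeneousKer_le _ n)

theorem le_finrank_eigPlus (m : ℕ) :
    2 * ((m + 1) / 2) + 2 * (m - m / 3) ≤ finrank ℝ (eigPlus (2 * m)) + (2 * m + 1) := by
  have : FiniteDimensional ℝ (eigPlus (2 * m)) := finiteDimensional_homogeneousKer _ _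
  calc _ ≤ finrank ℝ (quarterTurnEigenspace (-1) (2 * m)) +
        finrank ℝ (sixthTurnTraceKer (2 * m)) :=
      add_le_add (le_finrank_quarterTurnEigenspace_neg_one m) (le_finrank_sixthTurnTraceKer m)
    _ ≤ _ := finrank_quarterTurnEigenspace_add_finrank_sixthTurnTraceKer_le _ _
    _ ≤ _ := by
      gcongr
      exact Submodule.finrank_mono (quarterTurnEigenspace_inf_sixthTurnTraceKer_le_eigPlus _)

theorem le_finrank_eigMinus (m : ℕ) :
    2 * (m / 2) + 1 + 2 * (m - m / 3) ≤ finrank ℝ (eigMinus (2 * m)) + (2 * m + 1) := by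
  have : FiniteDimensional ℝ (eigMinus (2 * m)) := finiteDimensional_homogeneousKer _ _
  calc _ ≤ finrank ℝ (quarterTurnEigenspace 1 (2 * m)) +
        finrank ℝ (sixthTurnTraceKer (2 * m)) :=
      add_le_add (le_finrank_quarterTurnEigenspace_one m) (le_finrank_sixthTurnTraceKer m)
    _ ≤ _ := finrank_quarterTurnEigenspace_add_finrank_sixthTurnTraceKer_le _ _
    _ ≤ _ := by
      gcongr
      exact Submodule.finrank_mono (quarterTurnEigenspace_inf_sixthTurnTraceKer_le_eigMinus _)

end Phi

/-- For even `r`, lower bounds on the multiplicities of the eigenvalues `1` and `-1`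
of `Φ` on `V`, according to `r mod 12`. -/
theorem dim_eig_Phi (r : ℕ) (hr : Even r) :
    (r % 12 = 0 → ((r : ℤ) - 6) / 6 ≤ (Module.finrank ℝ ↥(eigPlus r) : ℤ)) ∧
    (r % 12 = 2 → ((r : ℤ) + 4) / 6 ≤ (Module.finrank ℝ ↥(eigPlus r) : ℤ)) ∧
    (r % 12 = 4 → ((r : ℤ) + 2) / 6 ≤ (Module.finrank ℝ ↥(eigPlus r) : ℤ)) ∧
    (r % 12 = 6 → (r : ℤ) / 6 ≤ (Module.finrank ℝ ↥(eigPlus r) : ℤ)) ∧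
    (r % 12 = 8 → ((r : ℤ) - 2) / 6 ≤ (Module.finrank ℝ ↥(eigPlus r) : ℤ)) ∧
    (r % 12 = 10 → ((r : ℤ) + 8) / 6 ≤ (Module.finrank ℝ ↥(eigPlus r) : ℤ)) ∧
    (r % 12 = 0 → (r : ℤ) / 6 ≤ (Module.finrank ℝ ↥(eigMinus r) : ℤ)) ∧
    (r % 12 = 2 → ((r : ℤ) - 2) / 6 ≤ (Module.finrank ℝ ↥(eigMinus r) : ℤ)) ∧
    (r % 12 = 4 → ((r : ℤ) + 8) / 6 ≤ (Module.finrank ℝ ↥(eigMinus r) : ℤ)) ∧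
    (r % 12 = 6 → ((r : ℤ) - 6) / 6 ≤ (Module.finrank ℝ ↥(eigMinus r) : ℤ)) ∧
    (r % 12 = 8 → ((r : ℤ) + 4) / 6 ≤ (Module.finrank ℝ ↥(eigMinus r) : ℤ)) ∧
    (r % 12 = 10 → ((r : ℤ) + 2) / 6 ≤ (Module.finrank ℝ ↥(eigMinus r) : ℤ)) := by
  obtain ⟨m, rfl⟩ := hr
  rw [← two_mul]
  have hplus := le_finrank_eigPlus m
  have hminus := le_finrank_eigMinus m
  refine ⟨?_, ?_, ?_, ?_, ?_, ?_, ?_, ?_, ?_, ?_, ?_, ?_⟩ <;> intro hmod <;> omega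
end

section
/- Let r be an even natural number. Then the dimension over ℝ of the eigenspace of Φ_sym for the eigenvalue 1 is at least (r−12)/12, (r−2)/12, (r−4)/12, (r−6)/12, (r−8)/12, (r+2)/12 according as r ≡ 0, 2, 4, 6, 8, 10 (mod 12); and the dimension of the eigenspace of Φ_sym for the eigenvalue −1 is at least r/12, (r−2)/12, (r+8)/12, (r−6)/12, (r+4)/12, (r+2)/12 according as r ≡ 0, 2, 4, 6, 8, 10 (mod 12). -/
open MvPolynomial

/-- The swap substitution `f(x,y) ↦ f(y,x)` as a linear endomorphism. -/
noncomputable def swapStar : MvPolynomial (Fin 2) ℝ →ₗ[ℝ] MvPolynomial (Fin 2) ℝ :=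
  (aeval ![X 1, X 0]).toLinearMap

/-- The space `V` of homogeneous polynomials of degree `r` in two variables. -/
noncomputable abbrev V (r : ℕ) : Submodule ℝ (MvPolynomial (Fin 2) ℝ) :=
  MvPolynomial.homogeneousSubmodule (Fin 2) ℝ r

/-- The subspace of `V` spanned by all polynomials of the form `f(x,y) - f(y,x)`. -/
noncomputable def K (r : ℕ) : Submodule ℝ ↥(V r) :=
  Submodule.span ℝ
    {g : ↥(V r) | ∃ f : ↥(V r),
      (g : MvPolynomial (Fin 2) ℝ) = (f : MvPolynomial (Fin 2) ℝ) - swapStar f}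

/-!
Symmetrization `f ↦ f(x, y) + f(y, x)` embeds `V_sym` into the polynomial ring. Put `z = -(x + y)`.
For `f = x ^ a * y ^ b` with `a`, `b` of the same parity, say `(-1) ^ a = s`, one finds
`Φ f + s f = s (x ^ a y ^ b + z ^ a y ^ b + x ^ a z ^ b)`, whose symmetrization is `s` times the sum
of `u ^ a v ^ b` over all ordered pairs of distinct `u, v ∈ {x, y, z}`. This is a symmetric function
of `x, y, z`, hence, as `x + y + z = 0`, a combination of the products `e₂ ^ i e₃ ^ j` with
`2i + 3j = r`, of which there are at most `r / 6 + 1`. So `Φ_sym + s` maps the span of the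
monomials with `(-1) ^ a = s` and `a ≤ b`, of dimension `(r + 2) / 4` for `s = -1` and `r / 4 + 1`
for `s = 1`, into a space of dimension at most `r / 6 + 1`, and rank–nullity bounds its kernel from
below.
-/

section LinearAlgebra

lemma card_le_finrank_ker_add_finrank {k M N ι : Type*} [DivisionRing k] [AddCommGroup M]
    [Module k M] [AddCommGroup N] [Module k N] [FiniteDimensional k M] [Fintype ι]
    (T : M →ₗ[k] N) {w : ι → M} (hw : LinearIndependent k w) (E : Submodule k N)
    [FiniteDimensional k E] (hE : ∀ i, T (w i) ∈ E) :
    Fintype.card ι ≤ Module.finrank k (LinearMap.ker T) + Module.finrank k E := by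
  set U := Submodule.span k (Set.range w)
  have hrange : LinearMap.range (T.domRestrict U) ≤ E := by
    rw [LinearMap.range_domRestrict, Submodule.map_le_iff_le_comap, Submodule.span_le]
    rintro _ ⟨i, rfl⟩
    exact hE i
  have hker : Module.finrank k (LinearMap.ker (T.domRestrict U)) ≤
      Module.finrank k (LinearMap.ker T) := by
    rw [LinearMap.ker_domRestrict, ← Submodule.finrank_map_subtype_eq]
    exact Submodule.finrank_mono (Submodule.map_comap_le _ _)
  calc Fintype.card ι = Module.finrank k U := (finrank_span_eq_card hw).symm
    _ = _ := (LinearMap.finrank_range_add_finrank_ker (T.domRestrict U)).symm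
    _ ≤ Module.finrank k E + Module.finrank k (LinearMap.ker T) :=
      add_le_add (Submodule.finrank_mono hrange) hker
    _ = _ := add_comm _ _

lemma eigenspace_one {R M : Type*} [CommRing R] [AddCommGroup M] [Module R M] (T : M →ₗ[R] M) :
    Module.End.eigenspace T 1 = LinearMap.ker (T - LinearMap.id) := by
  rw [Module.End.eigenspace_def, one_smul, Module.End.one_eq_id]

lemma eigenspace_neg_one {R M : Type*} [CommRing R] [AddCommGroup M] [Module R M]
    (T : M →ₗ[R] M) : Module.End.eigenspace T (-1) = LinearMap.ker (T + LinearMap.id) := by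
  rw [Module.End.eigenspace_def, neg_smul, one_smul, sub_neg_eq_add, Module.End.one_eq_id]

end LinearAlgebra

section WeightSpan

variable {R A : Type*} [CommSemiring R] [CommSemiring A] [Algebra R A]

variable (R) in
/-- The weight-`n` part of the subalgebra of `A` generated by `u` of weight `2` and `v` of
weight `3`, encoded as the span of the monomials `u ^ i * v ^ j` of weight `2 * i + 3 * j = n`.
It is used with `u`, `v` the elementary symmetric functions `e₂`, `e₃`. -/
def weightSpan (u v : A) (n : ℕ) : Submodule R A :=
  Submodule.span R {p | ∃ i j : ℕ, 2 * i + 3 * j = n ∧ u ^ i * v ^ j = p}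

lemma pow_mul_pow_mem_weightSpan (u v : A) (i j : ℕ) :
    u ^ i * v ^ j ∈ weightSpan R u v (2 * i + 3 * j) :=
  Submodule.subset_span ⟨i, j, rfl, rfl⟩

lemma one_mem_weightSpan (u v : A) : 1 ∈ weightSpan R u v 0 := by
  simpa using pow_mul_pow_mem_weightSpan (R := R) u v 0 0

lemma left_mem_weightSpan (u v : A) : u ∈ weightSpan R u v 2 := by
  simpa using pow_mul_pow_mem_weightSpan (R := R) u v 1 0

lemma right_mem_weightSpan (u v : A) : v ∈ weightSpan R u v 3 := by
  simpa using pow_mul_pow_mem_weightSpan (R := R) u v 0 1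

lemma mul_mem_weightSpan {u v p q : A} {m n : ℕ} (hp : p ∈ weightSpan R u v m)
    (hq : q ∈ weightSpan R u v n) : p * q ∈ weightSpan R u v (m + n) := by
  have hmul : weightSpan R u v m * weightSpan R u v n ≤ weightSpan R u v (m + n) := by
    rw [weightSpan, weightSpan, Submodule.span_mul_span]
    refine Submodule.span_mono ?_
    rintro _ ⟨_, ⟨i, j, hij, rfl⟩, _, ⟨k, l, hkl, rfl⟩, rfl⟩
    exact ⟨i + k, j + l, by omega, by ring⟩
  exact hmul (Submodule.mul_mem_mul hp hq)

lemma exists_finset_weightSpan_le_span (u v : A) (n : ℕ) :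
    ∃ s : Finset A, s.card ≤ n / 6 + 1 ∧ weightSpan R u v n ≤ Submodule.span R s := by
  classical
  -- `j ≡ n (mod 2)`, so a monomial `u ^ i * v ^ j` of weight `n` is determined by `j / 2 ≤ n / 6`.
  let monomialOf (k : ℕ) : A := u ^ ((n - 3 * (2 * k + n % 2)) / 2) * v ^ (2 * k + n % 2)
  refine ⟨(Finset.range (n / 6 + 1)).image monomialOf,
    Finset.card_image_le.trans_eq (Finset.card_range _), Submodule.span_mono ?_⟩
  rintro _ ⟨i, j, hij, rfl⟩
  have hj : 2 * (j / 2) + n % 2 = j := by omega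
  have hi : (n - 3 * j) / 2 = i := by omega
  refine Finset.mem_image.mpr ⟨j / 2, Finset.mem_range.mpr (by omega), ?_⟩
  simp only [monomialOf, hj, hi]

end WeightSpan

section PowerSums

variable {R A : Type*} [CommRing R] [CommRing A] [Algebra R A]

lemma sum_pow_mem_weightSpan {x y z : A} (h : x + y + z = 0) :
    ∀ n : ℕ, x ^ n + y ^ n + z ^ n ∈ weightSpan R (x * y + y * z + z * x) (x * y * z) n
  | 0 => by
    simpa using add_mem (add_mem (one_mem_weightSpan _ _) (one_mem_weightSpan _ _))
      (one_mem_weightSpan _ _)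
  | 1 => by simp [h]
  | 2 => by
    have hsq : x ^ 2 + y ^ 2 + z ^ 2 =
        -((x * y + y * z + z * x) + (x * y + y * z + z * x)) := by
      linear_combination (x + y + z) * h
    rw [hsq]
    exact neg_mem (add_mem (left_mem_weightSpan _ _) (left_mem_weightSpan _ _))
  | n + 3 => by
    have newton : x ^ (n + 3) + y ^ (n + 3) + z ^ (n + 3) =
        (x ^ n + y ^ n + z ^ n) * (x * y * z) -
          (x ^ (n + 1) + y ^ (n + 1) + z ^ (n + 1)) * (x * y + y * z + z * x) := by
      linear_combination (x ^ (n + 2) + y ^ (n + 2) + z ^ (n + 2)) * h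
    rw [newton]
    have hn := mul_mem_weightSpan (sum_pow_mem_weightSpan h n)
      (right_mem_weightSpan (R := R) (x * y + y * z + z * x) (x * y * z))
    have hn1 := mul_mem_weightSpan (sum_pow_mem_weightSpan h (n + 1))
      (left_mem_weightSpan (R := R) (x * y + y * z + z * x) (x * y * z))
    exact sub_mem hn hn1

lemma sum_pow_mul_pow_mem_weightSpan {x y z : A} (h : x + y + z = 0) (a b : ℕ) :
    x ^ a * y ^ b + x ^ a * z ^ b + y ^ a * x ^ b + y ^ a * z ^ b + z ^ a * x ^ b + z ^ a * y ^ b ∈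
      weightSpan R (x * y + y * z + z * x) (x * y * z) (a + b) := by
  convert sub_mem
    (mul_mem_weightSpan (sum_pow_mem_weightSpan h a) (sum_pow_mem_weightSpan h b))
    (sum_pow_mem_weightSpan h (a + b)) using 1
  ring

end PowerSums

section WeightSpanFinrank

variable {k A : Type*} [Field k] [CommRing A] [Algebra k A]

instance finiteDimensional_weightSpan (u v : A) (n : ℕ) :
    FiniteDimensional k (weightSpan k u v n) :=
  have ⟨_, _, hs⟩ := exists_finset_weightSpan_le_span (R := k) u v n
  Submodule.finiteDimensional_of_le hs

lemma finrank_weightSpan_le (u v : A) (n : ℕ) :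
    Module.finrank k (weightSpan k u v n) ≤ n / 6 + 1 :=
  have ⟨s, hcard, hs⟩ := exists_finset_weightSpan_le_span (R := k) u v n
  (Submodule.finrank_mono hs).trans ((finrank_span_finset_le_card s).trans hcard)

end WeightSpanFinrank

section BinaryMonomials

lemma isHomogeneous_X_pow_mul_X_pow {σ R : Type*} [CommSemiring R] (i j : σ) (a b : ℕ) :
    (X i ^ a * X j ^ b : MvPolynomial σ R).IsHomogeneous (a + b) :=
  (isHomogeneous_X_pow i a).mul (isHomogeneous_X_pow j b)

lemma coeff_X_zero_pow_mul_X_one_pow {R : Type*} [CommSemiring R] (a b c d : ℕ) :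
    coeff (Finsupp.single 0 c + Finsupp.single 1 d)
      (X 0 ^ a * X 1 ^ b : MvPolynomial (Fin 2) R) = if a = c ∧ b = d then 1 else 0 := by
  rw [X_pow_eq_monomial, X_pow_eq_monomial, monomial_mul, coeff_monomial, one_mul]
  congr 1
  simp [Finsupp.ext_iff, Fin.forall_fin_two]

lemma linearIndependent_X_pow_mul_X_pow_add_swap {R ι : Type*} [CommRing R] [IsDomain R]
    [NeZero (2 : R)] {a b : ι → ℕ} (ha : Function.Injective a) (hab : ∀ i, a i ≤ b i) :
    LinearIndependent R fun i ↦
      (X 0 ^ a i * X 1 ^ b i + X 0 ^ b i * X 1 ^ a i : MvPolynomial (Fin 2) R) := by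
  classical
  refine linearIndependent_iff'.mpr fun s g hg j hj ↦ ?_
  let m : Fin 2 →₀ ℕ := Finsupp.single 0 (a j) + Finsupp.single 1 (b j)
  have hcoeff (i : ι) :
      coeff m (X 0 ^ a i * X 1 ^ b i + X 0 ^ b i * X 1 ^ a i : MvPolynomial (Fin 2) R) =
        if i = j then 1 + (if a j = b j then 1 else 0) else 0 := by
    rw [coeff_add, coeff_X_zero_pow_mul_X_one_pow, coeff_X_zero_pow_mul_X_one_pow]
    by_cases hij : i = j
    · simp [hij, eq_comm]
    · have := ha.ne hij
      have := hab i
      have := hab j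
      rw [if_neg (by omega), if_neg (by omega), if_neg hij, add_zero]
  have hgj : g j * (1 + if a j = b j then 1 else 0) = 0 := by
    simpa only [coeff_sum, coeff_smul, hcoeff, coeff_zero, smul_eq_mul, mul_ite, mul_zero,
      Finset.sum_ite_eq', hj, if_true] using congrArg (coeff m) hg
  refine (mul_eq_zero.mp hgj).resolve_right ?_
  split_ifs
  · rw [one_add_one_eq_two]
    exact two_ne_zero
  · simp

end BinaryMonomials

section Operators

lemma swapStar_X_pow_mul_X_pow (a b : ℕ) :
    swapStar (X 0 ^ a * X 1 ^ b) = X 0 ^ b * X 1 ^ a := by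
  simp [swapStar, mul_comm]

lemma swapStar_swapStar (f : MvPolynomial (Fin 2) ℝ) : swapStar (swapStar f) = f := by
  have h : (aeval ![X 1, X 0]).comp (aeval ![X 1, X 0]) =
      AlgHom.id ℝ (MvPolynomial (Fin 2) ℝ) := by
    ext i
    fin_cases i <;> simp
  exact DFunLike.congr_fun h f

lemma Phi_mem_V {r : ℕ} {f : MvPolynomial (Fin 2) ℝ} (hf : f ∈ V r) : Phi f ∈ V r := by
  have hX (i : Fin 2) : (X i : MvPolynomial (Fin 2) ℝ).IsHomogeneous 1 := isHomogeneous_X ℝ i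
  have hσ := IsHomogeneous.aeval hf ![X 0 + X 1, X 1]
    (Fin.forall_fin_two.mpr ⟨(hX 0).add (hX 1), hX 1⟩)
  have hτ := IsHomogeneous.aeval hf ![X 0, X 0 + X 1]
    (Fin.forall_fin_two.mpr ⟨hX 0, (hX 0).add (hX 1)⟩)
  rw [one_mul] at hσ hτ
  exact hσ.add hτ

lemma Phi_X_pow_mul_X_pow {a b : ℕ} {s : ℝ} (hs : (-1) ^ a = s) (hab : Even (a + b)) :
    Phi (X 0 ^ a * X 1 ^ b) =
      s • ((-(X 0 + X 1)) ^ a * X 1 ^ b + X 0 ^ a * (-(X 0 + X 1)) ^ b) := by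
  have hPhi : Phi (X 0 ^ a * X 1 ^ b) = (X 0 + X 1) ^ a * X 1 ^ b + X 0 ^ a * (X 0 + X 1) ^ b := by
    simp [Phi, sigmaStar, tauStar]
  rw [hPhi]
  rcases Nat.even_or_odd a with ha | ha
  · have hb : Even b := (Nat.even_add.mp hab).mp ha
    rw [ha.neg_pow, hb.neg_pow, ← hs, ha.neg_one_pow, one_smul]
  · have hb : Odd b := by rwa [← Nat.not_even_iff_odd, ← Nat.even_add.mp hab, Nat.not_even_iff_odd]
    rw [ha.neg_pow, hb.neg_pow, ← hs, ha.neg_one_pow, neg_smul, one_smul]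
    ring

lemma Phi_add_swapStar_Phi_X_pow_mul_X_pow {a b : ℕ} {s : ℝ} (hs : (-1) ^ a = s)
    (hab : Even (a + b)) {z : MvPolynomial (Fin 2) ℝ} (hz : X 0 + X 1 + z = 0) :
    Phi (X 0 ^ a * X 1 ^ b) + swapStar (Phi (X 0 ^ a * X 1 ^ b)) =
      s • (X 0 ^ a * z ^ b + X 1 ^ a * z ^ b + z ^ a * X 0 ^ b + z ^ a * X 1 ^ b) := by
  obtain rfl : z = -(X 0 + X 1) := (neg_eq_of_add_eq_zero_right hz).symm
  rw [Phi_X_pow_mul_X_pow hs hab, map_smul, ← smul_add]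
  congr 1
  simp only [swapStar, AlgHom.toLinearMap_apply, map_add, map_mul, map_pow, map_neg, aeval_X,
    Matrix.cons_val_zero, Matrix.cons_val_one]
  ring

end Operators

section Symmetrization

lemma K_eq_ker (r : ℕ) :
    K r = LinearMap.ker ((LinearMap.id + swapStar) ∘ₗ (V r).subtype) := by
  refine le_antisymm (Submodule.span_le.mpr ?_) fun f hf ↦ Submodule.subset_span ?_
  · rintro g ⟨f, hf⟩
    simp [hf, swapStar_swapStar]
  · have hswap : swapStar (f : MvPolynomial (Fin 2) ℝ) = -f :=
      (neg_eq_of_add_eq_zero_right (LinearMap.mem_ker.mp hf)).symm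
    refine ⟨(2⁻¹ : ℝ) • f, ?_⟩
    rw [Submodule.coe_smul, map_smul, hswap, smul_neg, sub_neg_eq_add, ← add_smul]
    norm_num

/-- The symmetrization `f ↦ f(x, y) + f(y, x)` on `V_sym`, with values in the whole polynomial
ring. -/
noncomputable def symmetrization (r : ℕ) : (V r ⧸ K r) →ₗ[ℝ] MvPolynomial (Fin 2) ℝ :=
  (K r).liftQ ((LinearMap.id + swapStar) ∘ₗ (V r).subtype) (K_eq_ker r).le

lemma symmetrization_mk {r : ℕ} (f : V r) :
    symmetrization r (Submodule.Quotient.mk f) = f + swapStar f :=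
  rfl

lemma ker_symmetrization (r : ℕ) : LinearMap.ker (symmetrization r) = ⊥ :=
  Submodule.ker_liftQ_eq_bot' _ _ (K_eq_ker r)

/-- The class of `x ^ a * y ^ b` in `V_sym`; the degree `r` is kept apart from `a + b` so that
monomials with different exponents live in the same space. -/
noncomputable def monomialClass {r a b : ℕ} (h : a + b = r) : V r ⧸ K r :=
  Submodule.Quotient.mk ⟨X 0 ^ a * X 1 ^ b, h ▸ isHomogeneous_X_pow_mul_X_pow 0 1 a b⟩

lemma symmetrization_monomialClass {r a b : ℕ} (h : a + b = r) :
    symmetrization r (monomialClass h) = X 0 ^ a * X 1 ^ b + X 0 ^ b * X 1 ^ a := by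
  rw [monomialClass, symmetrization_mk, swapStar_X_pow_mul_X_pow]

lemma linearIndependent_monomialClass {r : ℕ} {ι : Type*} {a b : ι → ℕ}
    (ha : Function.Injective a) (hab : ∀ i, a i ≤ b i) (hr : ∀ i, a i + b i = r) :
    LinearIndependent ℝ fun i ↦ monomialClass (hr i) := by
  refine LinearIndependent.of_comp (symmetrization r) ?_
  simpa only [Function.comp_def, symmetrization_monomialClass] using
    linearIndependent_X_pow_mul_X_pow_add_swap ha hab

end Symmetrization

section Eigenspaces

instance finiteDimensional_V (r : ℕ) : FiniteDimensional ℝ (V r) :=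
  Module.Finite.iff_fg.mpr (homogeneousSubmodule_fg (Fin 2) ℝ r)

variable {r : ℕ} {PhiSym : (V r ⧸ K r) →ₗ[ℝ] (V r ⧸ K r)}
  (hsym : ∀ f g : V r, Phi (f : MvPolynomial (Fin 2) ℝ) = g →
    PhiSym (Submodule.Quotient.mk f) = Submodule.Quotient.mk g)

include hsym

lemma symmetrization_PhiSym_mk (f : V r) :
    symmetrization r (PhiSym (Submodule.Quotient.mk f)) = Phi f + swapStar (Phi f) := by
  rw [hsym f ⟨Phi f, Phi_mem_V f.2⟩ rfl, symmetrization_mk]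

lemma symmetrization_PhiSym_sub_smul_monomialClass_mem {a b : ℕ} {μ : ℝ} (hμ : (-1) ^ a = -μ)
    (hab : a + b = r) (hr : Even r) {z : MvPolynomial (Fin 2) ℝ} (hz : X 0 + X 1 + z = 0) :
    symmetrization r (PhiSym (monomialClass hab) - μ • monomialClass hab) ∈
      weightSpan ℝ (X 0 * X 1 + X 1 * z + z * X 0) (X 0 * X 1 * z) r := by
  have hsymm : symmetrization r (PhiSym (monomialClass hab) - μ • monomialClass hab) =
      -μ • (X 0 ^ a * X 1 ^ b + X 0 ^ a * z ^ b + X 1 ^ a * X 0 ^ b + X 1 ^ a * z ^ b +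
        z ^ a * X 0 ^ b + z ^ a * X 1 ^ b) := by
    rw [map_sub, map_smul, symmetrization_monomialClass, monomialClass,
      symmetrization_PhiSym_mk hsym, Phi_add_swapStar_Phi_X_pow_mul_X_pow hμ (hab ▸ hr) hz,
      mul_comm (X 0 ^ b)]
    module
  rw [hsymm, ← hab]
  exact Submodule.smul_mem _ _ (sum_pow_mul_pow_mem_weightSpan hz a b)

lemma card_le_finrank_eigenspace_PhiSym (hr : Even r) {ι : Type*} [Fintype ι] {a : ι → ℕ}
    (ha : Function.Injective a) (hle : ∀ i, 2 * a i ≤ r) {μ : ℝ} (hμ : ∀ i, (-1) ^ a i = -μ) :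
    Fintype.card ι ≤ Module.finrank ℝ (Module.End.eigenspace PhiSym μ) + (r / 6 + 1) := by
  have hab (i : ι) : a i + (r - a i) = r := by have := hle i; omega
  have hw := linearIndependent_monomialClass ha (fun i ↦ by have := hle i; omega) hab
  have hcard := card_le_finrank_ker_add_finrank
    (symmetrization r ∘ₗ (PhiSym - μ • (1 : Module.End ℝ (V r ⧸ K r)))) hw _
    fun i ↦ symmetrization_PhiSym_sub_smul_monomialClass_mem hsym (hμ i) (hab i) hr
      (add_neg_cancel _)
  rw [LinearMap.ker_comp_of_ker_eq_bot _ (ker_symmetrization r),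
    ← Module.End.eigenspace_def] at hcard
  exact hcard.trans (Nat.add_le_add_left (finrank_weightSpan_le _ _ r) _)

lemma le_finrank_eigenspace_PhiSym_one (hr : Even r) :
    (r + 2) / 4 ≤ Module.finrank ℝ (Module.End.eigenspace PhiSym 1) + (r / 6 + 1) := by
  simpa using card_le_finrank_eigenspace_PhiSym hsym hr (ι := Fin ((r + 2) / 4))
    (a := fun i ↦ 2 * i + 1) (fun i j hij ↦ Fin.ext (by simpa using hij))
    (fun i ↦ by omega) (fun i ↦ by simp [pow_add])

lemma le_finrank_eigenspace_PhiSym_neg_one (hr : Even r) :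
    r / 4 + 1 ≤ Module.finrank ℝ (Module.End.eigenspace PhiSym (-1)) + (r / 6 + 1) := by
  simpa only [Fintype.card_fin] using
    card_le_finrank_eigenspace_PhiSym hsym hr (ι := Fin (r / 4 + 1))
      (a := fun i ↦ 2 * i) (fun i j hij ↦ Fin.ext (by simpa using hij))
      (fun i ↦ by omega) (fun i ↦ by simp)

end Eigenspaces

/-- For even `r`, lower bounds on the multiplicities of the eigenvalues `1` and `-1`
of `Φ_sym` on `V_sym = V / K`, according to `r mod 12`.  Here `Φ_sym` is the operator
induced by `Φ` on the quotient, characterized by the compatibility hypothesis `hsym`. -/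
theorem dim_eig_PhiSym (r : ℕ) (hr : Even r)
    (PhiSym : (↥(V r) ⧸ K r) →ₗ[ℝ] (↥(V r) ⧸ K r))
    (hsym : ∀ f g : ↥(V r),
      Phi (f : MvPolynomial (Fin 2) ℝ) = (g : MvPolynomial (Fin 2) ℝ) →
      PhiSym (Submodule.Quotient.mk f) = Submodule.Quotient.mk g) :
    (r % 12 = 0 → ((r : ℤ) - 12) / 12 ≤
      (Module.finrank ℝ ↥(LinearMap.ker (PhiSym - LinearMap.id)) : ℤ)) ∧
    (r % 12 = 2 → ((r : ℤ) - 2) / 12 ≤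
      (Module.finrank ℝ ↥(LinearMap.ker (PhiSym - LinearMap.id)) : ℤ)) ∧
    (r % 12 = 4 → ((r : ℤ) - 4) / 12 ≤
      (Module.finrank ℝ ↥(LinearMap.ker (PhiSym - LinearMap.id)) : ℤ)) ∧
    (r % 12 = 6 → ((r : ℤ) - 6) / 12 ≤
      (Module.finrank ℝ ↥(LinearMap.ker (PhiSym - LinearMap.id)) : ℤ)) ∧
    (r % 12 = 8 → ((r : ℤ) - 8) / 12 ≤
      (Module.finrank ℝ ↥(LinearMap.ker (PhiSym - LinearMap.id)) : ℤ)) ∧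
    (r % 12 = 10 → ((r : ℤ) + 2) / 12 ≤
      (Module.finrank ℝ ↥(LinearMap.ker (PhiSym - LinearMap.id)) : ℤ)) ∧
    (r % 12 = 0 → (r : ℤ) / 12 ≤
      (Module.finrank ℝ ↥(LinearMap.ker (PhiSym + LinearMap.id)) : ℤ)) ∧
    (r % 12 = 2 → ((r : ℤ) - 2) / 12 ≤
      (Module.finrank ℝ ↥(LinearMap.ker (PhiSym + LinearMap.id)) : ℤ)) ∧
    (r % 12 = 4 → ((r : ℤ) + 8) / 12 ≤
      (Module.finrank ℝ ↥(LinearMap.ker (PhiSym + LinearMap.id)) : ℤ)) ∧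
    (r % 12 = 6 → ((r : ℤ) - 6) / 12 ≤
      (Module.finrank ℝ ↥(LinearMap.ker (PhiSym + LinearMap.id)) : ℤ)) ∧
    (r % 12 = 8 → ((r : ℤ) + 4) / 12 ≤
      (Module.finrank ℝ ↥(LinearMap.ker (PhiSym + LinearMap.id)) : ℤ)) ∧
    (r % 12 = 10 → ((r : ℤ) + 2) / 12 ≤
      (Module.finrank ℝ ↥(LinearMap.ker (PhiSym + LinearMap.id)) : ℤ)) := by
  have h_one := le_finrank_eigenspace_PhiSym_one hsym hr
  have h_neg_one := le_finrank_eigenspace_PhiSym_neg_one hsym hr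
  rw [eigenspace_one] at h_one
  rw [eigenspace_neg_one] at h_neg_one
  refine ⟨?_, ?_, ?_, ?_, ?_, ?_, ?_, ?_, ?_, ?_, ?_, ?_⟩ <;> intro h <;> omega
end

section
/- Let r be an odd natural number and set ℓ = (r+2)/3 if r ≡ 1 (mod 6), ℓ = r/3 if r ≡ 3 (mod 6), and ℓ = (r+1)/3 if r ≡ 5 (mod 6). Then there exist real numbers a_1, …, a_ℓ and a natural number N such that, for every homogeneous polynomial f of degree r in two real variables and every n ≥ N, S_n(f) = Σ_{j=1}^{ℓ} a_j S_{n−j}(f). The coefficients a_j depend only on r, not on f. -/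
/-- The Stern array: `stern n k` is the entry `s(n,k)` of the Stern array,
with `s(1,1) = 1`, `s(1,k) = 0` for `k ≠ 1`, and
`s(n,2k) = s(n-1,k)`, `s(n,2k+1) = s(n-1,k) + s(n-1,k+1)`. -/
def stern : ℕ → ℤ → ℕ
  | 0, _ => 0
  | 1, k => if k = 1 then 1 else 0
  | n + 2, k =>
    if k % 2 = 0 then stern (n + 1) (k / 2)
    else stern (n + 1) ((k - 1) / 2) + stern (n + 1) ((k + 1) / 2)

/-- For a polynomial `f` in two variables,
`S n f = ∑_{k=0}^{2^n - 1} f(s(n,k), s(n,k+1))`. -/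
noncomputable def S (n : ℕ) (f : MvPolynomial (Fin 2) ℝ) : ℝ :=
  ∑ k ∈ Finset.range (2 ^ n),
    MvPolynomial.eval ![(stern n (k : ℤ) : ℝ), (stern n ((k : ℤ) + 1) : ℝ)] f

/-!
Passing from row `n` to row `n + 1` of the array is the substitution
`T f (x, y) = f (x, x + y) + f (x + y, y)`, so `S (n + 1) f = S 1 (T ^ n f)`. Each row is a
palindrome, so `f` may be replaced by its symmetrization; on the symmetric forms of degree `r`, a
space of dimension at most `r / 2 + 1`, a recurrence of order `rank T` comes from the
Cayley–Hamilton theorem on the range of `T`.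

The rank is small because `T f (x, y) = (f + f ∘ ρ) (x, x + y)` for `ρ (x, y) = (y, y - x)`: every
form with `f ∘ ρ = -f` is killed by `T`. The forms `x ^ 2 - x y + y ^ 2` and `(x y (x - y)) ^ 2` are
invariant under `ρ` and `(x + y) (x - 2 y) (2 x - y)` changes sign, so their products provide
`(r + 3) / 6` independent symmetric elements of the kernel.
-/

namespace Stern

section LinearAlgebra

open Polynomial

theorem pow_mul_eq_sum_of_monic {R A : Type*} [CommRing R] [Ring A] [Algebra R A] {q : R[X]}
    (hq : q.Monic) {x y : A} (hxy : aeval x q * y = 0) (n : ℕ) :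
    x ^ (n + q.natDegree) * y = ∑ j ∈ Finset.Icc 1 q.natDegree,
      -q.coeff (q.natDegree - j) • (x ^ (n + q.natDegree - j) * y) := by
  have hlead : x ^ q.natDegree * y =
      -∑ i ∈ Finset.range q.natDegree, q.coeff i • (x ^ i * y) := by
    rw [aeval_eq_sum_range, Finset.sum_range_succ, hq.coeff_natDegree, one_smul, add_mul,
      Finset.sum_mul] at hxy
    simpa only [smul_mul_assoc] using eq_neg_of_add_eq_zero_right hxy
  rw [pow_add, mul_assoc, hlead, ← Finset.sum_neg_distrib, Finset.mul_sum]
  refine Finset.sum_nbij' (q.natDegree - ·) (q.natDegree - ·) ?_ ?_ ?_ ?_ fun i hi => ?_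
  any_goals intro i hi; simp only [Finset.mem_range, Finset.mem_Icc] at hi ⊢; omega
  rw [Finset.mem_range] at hi
  rw [show q.natDegree - (q.natDegree - i) = i by omega,
    show n + q.natDegree - (q.natDegree - i) = n + i by omega, mul_neg, mul_smul_comm, neg_smul,
    pow_add, mul_assoc]

theorem coe_aeval_restrict_apply {R M : Type*} [CommSemiring R] [AddCommMonoid M] [Module R M]
    {t : Module.End R M} {p : Submodule R M} (h : ∀ x ∈ p, t x ∈ p) (q : R[X]) (x : p) :
    (aeval (t.restrict h : Module.End R p) q x : M) = aeval t q (x : M) := by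
  simp [aeval_eq_sum_range, Module.End.pow_restrict _ h]

variable {K V : Type*} [Field K] [AddCommGroup V] [Module K V] [FiniteDimensional K V]

theorem exists_monic_aeval_mul_self_eq_zero (t : Module.End K V) :
    ∃ p : K[X], p.Monic ∧ p.natDegree = Module.finrank K (LinearMap.range t) ∧
      aeval t p * t = 0 := by
  let s : Module.End K (LinearMap.range t) := t.restrict fun x _ => t.mem_range_self x
  refine ⟨s.charpoly, s.charpoly_monic, s.charpoly_natDegree, LinearMap.ext fun v => ?_⟩
  have h := congrArg Subtype.val
    (LinearMap.congr_fun s.aeval_self_charpoly ⟨t v, t.mem_range_self v⟩)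
  rwa [coe_aeval_restrict_apply] at h

theorem exists_pow_eq_sum_of_finrank_range_le (t : Module.End K V) {ℓ : ℕ}
    (hℓ : Module.finrank K (LinearMap.range t) ≤ ℓ) :
    ∃ a : ℕ → K, ∀ n, ℓ + 1 ≤ n → t ^ n = ∑ j ∈ Finset.Icc 1 ℓ, a j • t ^ (n - j) := by
  obtain ⟨p, hp, hp_degree, hp_zero⟩ := exists_monic_aeval_mul_self_eq_zero t
  set q := X ^ (ℓ - p.natDegree) * p with hq
  have hq_monic : q.Monic := (monic_X_pow _).mul hp
  have hq_degree : q.natDegree = ℓ := by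
    rw [hq, (monic_X_pow _).natDegree_mul hp, natDegree_X_pow]
    omega
  have hq_zero : aeval t q * t = 0 := by rw [map_mul, mul_assoc, hp_zero, mul_zero]
  refine ⟨fun j => -q.coeff (ℓ - j), fun n hn => ?_⟩
  obtain ⟨m, rfl⟩ := Nat.exists_eq_add_of_le' hn
  have h := pow_mul_eq_sum_of_monic hq_monic hq_zero m
  simp only [hq_degree, ← pow_succ] at h
  rw [← add_assoc, h]
  refine Finset.sum_congr rfl fun j hj => ?_
  rw [Nat.sub_add_comm ((Finset.mem_Icc.1 hj).2.trans le_add_self)]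

theorem linearIndependent_of_injective_natDegree {R ι : Type*} [CommRing R] [IsDomain R]
    {p : ι → R[X]} (hp : ∀ i, p i ≠ 0) (hdeg : Function.Injective fun i => (p i).natDegree) :
    LinearIndependent R p := by
  rw [linearIndependent_iff']
  intro s g hg i hi
  by_contra hgi
  have hdisjoint : Set.Pairwise {i | i ∈ s ∧ g i • p i ≠ 0}
      (Function.onFun Ne (degree ∘ fun i => g i • p i)) := by
    rintro i ⟨-, hi⟩ j ⟨-, hj⟩ hij heq
    refine hij (hdeg ?_)
    simpa [natDegree_smul _ (left_ne_zero_of_smul hi), natDegree_smul _ (left_ne_zero_of_smul hj)]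
      using natDegree_eq_natDegree heq
  have hsup := degree_sum_eq_of_disjoint _ s hdisjoint
  rw [hg, degree_zero, eq_comm, Finset.sup_eq_bot_iff] at hsup
  exact smul_ne_zero hgi (hp i) (degree_eq_bot.1 (hsup i hi))

end LinearAlgebra

open MvPolynomial

section SternOperator

variable {R : Type*} [CommSemiring R]

/-- The operator `T f (x, y) = f (x, x + y) + f (x + y, y)`, which expresses the passage from one
row of the Stern array to the next. -/
noncomputable def sternOperator : Module.End R (MvPolynomial (Fin 2) R) :=
  (bind₁ ![X 0, X 0 + X 1]).toLinearMap + (bind₁ ![X 0 + X 1, X 1]).toLinearMap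

theorem sternOperator_apply (f : MvPolynomial (Fin 2) R) :
    sternOperator f = bind₁ ![X 0, X 0 + X 1] f + bind₁ ![X 0 + X 1, X 1] f :=
  rfl

theorem eval_sternOperator (x y : R) (f : MvPolynomial (Fin 2) R) :
    eval ![x, y] (sternOperator f) = eval ![x, x + y] f + eval ![x + y, y] f := by
  simp only [sternOperator_apply, map_add, ← aeval_eq_eval, aeval_bind₁]
  congr 3 <;> ext i <;> fin_cases i <;> simp

theorem isHomogeneous_sternOperator {r : ℕ} {f : MvPolynomial (Fin 2) R}
    (hf : f.IsHomogeneous r) : (sternOperator f).IsHomogeneous r := by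
  have hX (i : Fin 2) : (X i : MvPolynomial (Fin 2) R).IsHomogeneous 1 := isHomogeneous_X R i
  rw [← one_mul r]
  refine (hf.aeval _ ?_).add (hf.aeval _ ?_) <;> rw [Fin.forall_fin_two]
  exacts [⟨hX 0, (hX 0).add (hX 1)⟩, ⟨(hX 0).add (hX 1), hX 1⟩]

theorem rename_swap_sternOperator (f : MvPolynomial (Fin 2) R) :
    rename (Equiv.swap 0 1) (sternOperator f) = sternOperator (rename (Equiv.swap 0 1) f) := by
  simp only [sternOperator_apply, map_add, rename_bind₁, bind₁_rename]
  rw [add_comm]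
  congr 3 <;> ext1 i <;> fin_cases i <;> simp [add_comm]

theorem isSymmetric_fin_two_iff {f : MvPolynomial (Fin 2) R} :
    f.IsSymmetric ↔ rename (Equiv.swap 0 1) f = f := by
  refine ⟨fun h => h _, fun h e => ?_⟩
  obtain rfl | rfl : e = 1 ∨ e = Equiv.swap 0 1 := by decide +revert
  exacts [rename_id_apply f, h]

theorem isSymmetric_sternOperator {f : MvPolynomial (Fin 2) R} (hf : f.IsSymmetric) :
    (sternOperator f).IsSymmetric := by
  rw [isSymmetric_fin_two_iff, rename_swap_sternOperator, hf]

end SternOperator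

section SternSum

theorem stern_two_mul (n : ℕ) (k : ℤ) : stern (n + 2) (2 * k) = stern (n + 1) k := by
  rw [stern, if_pos (by omega), Int.mul_ediv_cancel_left k two_ne_zero]

theorem stern_two_mul_add_one (n : ℕ) (k : ℤ) :
    stern (n + 2) (2 * k + 1) = stern (n + 1) k + stern (n + 1) (k + 1) := by
  rw [stern, if_neg (by omega)]
  congr 2 <;> omega

theorem sum_range_two_mul {M : Type*} [AddCommMonoid M] (g : ℕ → M) (m : ℕ) :
    ∑ k ∈ Finset.range (2 * m), g k = ∑ k ∈ Finset.range m, (g (2 * k) + g (2 * k + 1)) := by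
  induction m with
  | zero => rfl
  | succ m ih => rw [mul_add_one, Finset.sum_range_succ, Finset.sum_range_succ, ih,
      Finset.sum_range_succ, add_assoc]

theorem S_add_two (n : ℕ) (f : MvPolynomial (Fin 2) ℝ) :
    S (n + 2) f = S (n + 1) (sternOperator f) := by
  rw [S, S, pow_succ', sum_range_two_mul]
  refine Finset.sum_congr rfl fun k _ => ?_
  have hnext : (2 * k : ℤ) + 1 + 1 = 2 * (k + 1) := by ring
  push_cast
  rw [hnext, stern_two_mul, stern_two_mul, stern_two_mul_add_one, eval_sternOperator, Nat.cast_add]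

theorem S_add_one (n : ℕ) (f : MvPolynomial (Fin 2) ℝ) :
    S (n + 1) f = S 1 ((sternOperator ^ n) f) := by
  induction n generalizing f with
  | zero => rfl
  | succ n ih => rw [pow_succ, Module.End.mul_apply, ← ih, S_add_two]

theorem S_rename_swap (n : ℕ) (f : MvPolynomial (Fin 2) ℝ) :
    S (n + 1) (rename (Equiv.swap 0 1) f) = S (n + 1) f := by
  induction n generalizing f with
  | zero =>
    have hswap (x y : ℝ) : ![x, y] ∘ Equiv.swap 0 1 = ![y, x] := by
      ext i; fin_cases i <;> rfl
    simp [S, Finset.sum_range_succ, stern, eval_rename, hswap, add_comm]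
  | succ n ih => rw [S_add_two, S_add_two, ← rename_swap_sternOperator, ih]

/-- `S n` as a linear functional. -/
noncomputable def sternSum (n : ℕ) : MvPolynomial (Fin 2) ℝ →ₗ[ℝ] ℝ where
  toFun := S n
  map_add' f g := by simp only [S, map_add, Finset.sum_add_distrib]
  map_smul' c f := by simp only [S, smul_eval, Finset.mul_sum, RingHom.id_apply, smul_eq_mul]

theorem sternSum_apply (n : ℕ) (f : MvPolynomial (Fin 2) ℝ) : sternSum n f = S n f :=
  rfl

end SternSum

section SymmetricForms

section CommSemiring

variable (R : Type*) [CommSemiring R] (r : ℕ)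

/-- The symmetric binary forms of degree `r`. -/
noncomputable def symmetricForms : Submodule R (MvPolynomial (Fin 2) R) :=
  homogeneousSubmodule (Fin 2) R r ⊓ (symmetricSubalgebra (Fin 2) R).toSubmodule

variable {R r}

theorem sternOperator_mem_symmetricForms {f : MvPolynomial (Fin 2) R}
    (hf : f ∈ symmetricForms R r) : sternOperator f ∈ symmetricForms R r :=
  ⟨isHomogeneous_sternOperator hf.1, isSymmetric_sternOperator hf.2⟩

variable (R r) in
/-- The restriction of `sternOperator` to the symmetric forms of degree `r`. -/
noncomputable def sternEnd : Module.End R (symmetricForms R r) :=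
  sternOperator.restrict fun _ => sternOperator_mem_symmetricForms

theorem coe_sternEnd_pow_apply (k : ℕ) (f : symmetricForms R r) :
    ((sternEnd R r ^ k) f : MvPolynomial (Fin 2) R) = (sternOperator ^ k) f := by
  rw [sternEnd, Module.End.pow_restrict, LinearMap.coe_restrict_apply]

theorem eq_zero_of_mem_symmetricForms_of_coeff {f : MvPolynomial (Fin 2) R}
    (hf : f ∈ symmetricForms R r)
    (hcoeff : ∀ i ≤ r / 2, f.coeff (Finsupp.single 0 i + Finsupp.single 1 (r - i)) = 0) :
    f = 0 := by
  have hlow (m : Fin 2 →₀ ℕ) (hm : m 0 + m 1 = r) (hm0 : m 0 ≤ r / 2) : f.coeff m = 0 := by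
    rw [← hcoeff _ hm0]
    congr 1
    ext i
    fin_cases i
    · simp
    · simp; omega
  ext m
  by_cases hm : m 0 + m 1 = r
  · obtain hm0 | hm1 : m 0 ≤ r / 2 ∨ m 1 ≤ r / 2 := by omega
    · exact hlow m hm hm0
    · rw [← coeff_rename_mapDomain _ (Equiv.swap 0 1).injective, hf.2 (Equiv.swap 0 1), coeff_zero]
      apply hlow <;> simp [hm1, add_comm (m 1), hm]
  · exact hf.1.coeff_eq_zero (by simpa [Finsupp.degree_eq_sum] using hm)

variable (R r) in
/-- The coefficients of `x ^ i * y ^ (r - i)` for `i ≤ r / 2`, which determine a symmetric form. -/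
noncomputable def lowCoeffs : symmetricForms R r →ₗ[R] Fin (r / 2 + 1) → R :=
  LinearMap.pi fun i =>
    lcoeff R (Finsupp.single 0 (i : ℕ) + Finsupp.single 1 (r - i)) ∘ₗ (symmetricForms R r).subtype

end CommSemiring

theorem lowCoeffs_injective (R : Type*) [CommRing R] (r : ℕ) :
    Function.Injective (lowCoeffs R r) := by
  rw [injective_iff_map_eq_zero]
  exact fun f hf => Subtype.ext <| eq_zero_of_mem_symmetricForms_of_coeff f.2 fun i hi =>
    congrFun hf ⟨i, Nat.lt_succ_of_le hi⟩

variable (K : Type*) [Field K] (r : ℕ)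

instance : FiniteDimensional K (symmetricForms K r) :=
  FiniteDimensional.of_injective _ (lowCoeffs_injective K r)

theorem finrank_symmetricForms_le : Module.finrank K (symmetricForms K r) ≤ r / 2 + 1 := by
  simpa using LinearMap.finrank_le_finrank_of_injective (lowCoeffs_injective K r)

variable {r}

theorem exists_mem_symmetricForms_S_eq {f : MvPolynomial (Fin 2) ℝ} (hf : f.IsHomogeneous r) :
    ∃ g ∈ symmetricForms ℝ r, ∀ n, S (n + 1) g = S (n + 1) f := by
  refine ⟨(2⁻¹ : ℝ) • (f + rename (Equiv.swap 0 1) f), Submodule.smul_mem _ _ ⟨?_, ?_⟩, fun n => ?_⟩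
  · exact hf.add hf.rename_isHomogeneous
  · refine isSymmetric_fin_two_iff.2 ?_
    rw [map_add, rename_rename, ← Equiv.coe_trans, Equiv.swap_swap, Equiv.coe_refl,
      rename_id_apply, add_comm]
  · rw [← sternSum_apply, map_smul, map_add, sternSum_apply, sternSum_apply, S_rename_swap,
      smul_eq_mul]
    ring

end SymmetricForms

section Kernel

section CommRing

variable {R : Type*} [CommRing R]

variable (R) in
/-- The substitution `f (x, y) ↦ f (y, y - x)`, of order six; evaluating the result at `(x, x + y)`
gives `f (x + y, y)`, so it relates the two summands of `sternOperator`. -/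
noncomputable def rotation : MvPolynomial (Fin 2) R →ₐ[R] MvPolynomial (Fin 2) R :=
  bind₁ ![X 1, X 1 - X 0]

theorem sternOperator_eq_bind₁_add_rotation (f : MvPolynomial (Fin 2) R) :
    sternOperator f = bind₁ ![X 0, X 0 + X 1] (f + rotation R f) := by
  rw [sternOperator_apply, map_add, rotation, bind₁_bind₁]
  congr 3
  ext1 i
  fin_cases i <;> simp

variable (R) in
/-- The symmetric forms `(x + y) (x - 2 y) (2 x - y) (x² - x y + y²) ^ a (x y (x - y)) ^ (2 c)`, on
which `rotation` acts by `-1`. -/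
noncomputable def kernelForm (a c : ℕ) : MvPolynomial (Fin 2) R :=
  (X 0 + X 1) * (X 0 - 2 * X 1) * (2 * X 0 - X 1) * (X 0 ^ 2 - X 0 * X 1 + X 1 ^ 2) ^ a *
    ((X 0 * X 1 * (X 0 - X 1)) ^ 2) ^ c

variable (a c : ℕ)

theorem isHomogeneous_kernelForm : (kernelForm R a c).IsHomogeneous (3 + 2 * a + 6 * c) := by
  have hx : (X 0 : MvPolynomial (Fin 2) R).IsHomogeneous 1 := isHomogeneous_X _ _
  have hy : (X 1 : MvPolynomial (Fin 2) R).IsHomogeneous 1 := isHomogeneous_X _ _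
  have htwo {f : MvPolynomial (Fin 2) R} (hf : f.IsHomogeneous 1) : (2 * f).IsHomogeneous 1 := by
    rw [two_mul]
    exact hf.add hf
  have hcubic := ((hx.add hy).mul (hx.sub (htwo hy))).mul ((htwo hx).sub hy)
  have hquadratic := ((hx.pow 2).sub (hx.mul hy)).add (hy.pow 2)
  have hsextic := ((hx.mul hy).mul (hx.sub hy)).pow 2
  exact (hcubic.mul (hquadratic.pow a)).mul (hsextic.pow c)

theorem isSymmetric_kernelForm : (kernelForm R a c).IsSymmetric := by
  simp only [isSymmetric_fin_two_iff, kernelForm, map_mul, map_pow, map_sub, map_add, map_ofNat,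
    rename_X, Equiv.swap_apply_left, Equiv.swap_apply_right]
  congr 2 <;> ring

theorem kernelForm_mem_symmetricForms :
    kernelForm R a c ∈ symmetricForms R (3 + 2 * a + 6 * c) :=
  ⟨isHomogeneous_kernelForm a c, isSymmetric_kernelForm a c⟩

theorem rotation_kernelForm : rotation R (kernelForm R a c) = -kernelForm R a c := by
  simp only [kernelForm, rotation, map_mul, map_pow, map_sub, map_add, map_ofNat, bind₁_X_right,
    Matrix.cons_val_zero, Matrix.cons_val_one, ← neg_mul]
  congr 2 <;> ring

theorem sternOperator_kernelForm : sternOperator (kernelForm R a c) = 0 := by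
  rw [sternOperator_eq_bind₁_add_rotation, rotation_kernelForm, add_neg_cancel, map_zero]

end CommRing

section IsDomain

variable (R : Type*) [CommRing R] [IsDomain R] [NeZero (2 : R)]

theorem natDegree_aeval_kernelForm (a c : ℕ) :
    (aeval ![Polynomial.X, (1 : Polynomial R)] (kernelForm R a c)).natDegree =
      3 + 2 * a + 4 * c := by
  have hcubic : ((Polynomial.X + 1) * (Polynomial.X - 2) * (2 * Polynomial.X - 1) :
      Polynomial R).natDegree = 3 := by
    ring_nf
    compute_degree!
    exact two_ne_zero
  have hquadratic : (Polynomial.X ^ 2 - Polynomial.X + 1 : Polynomial R).natDegree = 2 := by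
    compute_degree!
  have hquartic : ((Polynomial.X * (Polynomial.X - 1)) ^ 2 : Polynomial R).natDegree = 4 := by
    ring_nf
    compute_degree!
  have ne_zero {p : Polynomial R} {d : ℕ} (hp : p.natDegree = d + 1) : p ≠ 0 :=
    Polynomial.ne_zero_of_natDegree_gt (by rw [hp]; exact d.succ_pos)
  simp only [kernelForm, map_mul, map_pow, map_sub, map_add, map_ofNat, aeval_X,
    Matrix.cons_val_zero, Matrix.cons_val_one, mul_one, one_pow]
  rw [Polynomial.natDegree_mul (mul_ne_zero (ne_zero hcubic) (pow_ne_zero _ (ne_zero hquadratic)))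
      (pow_ne_zero _ (ne_zero hquartic)),
    Polynomial.natDegree_mul (ne_zero hcubic) (pow_ne_zero _ (ne_zero hquadratic)),
    Polynomial.natDegree_pow, Polynomial.natDegree_pow, hcubic, hquadratic, hquartic]
  ring

theorem linearIndependent_kernelForm {ι : Type*} {a c : ι → ℕ}
    (h : Function.Injective fun i => a i + 2 * c i) :
    LinearIndependent R fun i => kernelForm R (a i) (c i) := by
  refine .of_comp (aeval ![Polynomial.X, (1 : Polynomial R)]).toLinearMap
    (linearIndependent_of_injective_natDegree (fun i => ?_) fun i j hij => ?_)
  · refine Polynomial.ne_zero_of_natDegree_gt (n := 2) ?_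
    rw [Function.comp_apply, AlgHom.toLinearMap_apply, natDegree_aeval_kernelForm]
    omega
  · simp only [Function.comp_apply, AlgHom.toLinearMap_apply, natDegree_aeval_kernelForm] at hij
    exact h (by grind)

end IsDomain

variable (K : Type*) [Field K] [NeZero (2 : K)]

theorem le_finrank_ker_sternEnd {r : ℕ} (hr : Odd r) :
    (r + 3) / 6 ≤ Module.finrank K (LinearMap.ker (sternEnd K r)) := by
  let a (c : Fin ((r + 3) / 6)) : ℕ := (r - 3) / 2 - 3 * c
  have hdegree (c) : 3 + 2 * a c + 6 * c = r := by
    have := Nat.odd_iff.1 hr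
    grind
  let v (c : Fin ((r + 3) / 6)) : LinearMap.ker (sternEnd K r) :=
    ⟨⟨kernelForm K (a c) c, by simpa only [hdegree] using kernelForm_mem_symmetricForms (a c) c⟩,
      Subtype.ext (sternOperator_kernelForm (a c) c)⟩
  have hv : LinearIndependent K v :=
    .of_comp ((symmetricForms K r).subtype ∘ₗ (LinearMap.ker (sternEnd K r)).subtype)
      (linearIndependent_kernelForm K (a := a) fun c d hcd => by grind)
  simpa using hv.fintype_card_le_finrank

theorem finrank_range_sternEnd_add_le {r : ℕ} (hr : Odd r) :
    Module.finrank K (LinearMap.range (sternEnd K r)) + (r + 3) / 6 ≤ r / 2 + 1 := by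
  have hrank := (sternEnd K r).finrank_range_add_finrank_ker
  have hker := le_finrank_ker_sternEnd K hr
  have hdim := finrank_symmetricForms_le K r
  omega

end Kernel

end Stern

/-- For odd `r`, with `ℓ = (r+2)/3` if `r ≡ 1 (mod 6)`, `ℓ = r/3` if `r ≡ 3 (mod 6)`,
`ℓ = (r+1)/3` if `r ≡ 5 (mod 6)`, there exist reals `a_1, …, a_ℓ` (depending only on
`r`) and `N` such that for every homogeneous polynomial `f` of degree `r` and every
`n ≥ N`, `S n f = ∑_{j=1}^{ℓ} a_j S (n-j) f`. -/
theorem S_short_recurrence_odd (r : ℕ) (hr : Odd r) (ℓ : ℕ)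
    (hℓ : (r % 6 = 1 ∧ ℓ = (r + 2) / 3) ∨ (r % 6 = 3 ∧ ℓ = r / 3) ∨
      (r % 6 = 5 ∧ ℓ = (r + 1) / 3)) :
    ∃ (a : ℕ → ℝ) (N : ℕ), ∀ f : MvPolynomial (Fin 2) ℝ, f.IsHomogeneous r →
      ∀ n : ℕ, N ≤ n → S n f = ∑ j ∈ Finset.Icc 1 ℓ, a j * S (n - j) f := by
  obtain ⟨a, ha⟩ := Stern.exists_pow_eq_sum_of_finrank_range_le (Stern.sternEnd ℝ r) (ℓ := ℓ) (by
    have := Stern.finrank_range_sternEnd_add_le ℝ hr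
    have := Nat.odd_iff.1 hr
    omega)
  refine ⟨a, ℓ + 2, fun f hf n hn => ?_⟩
  obtain ⟨g, hg, hgf⟩ := Stern.exists_mem_symmetricForms_S_eq hf
  let φ := Stern.sternSum 1 ∘ₗ (Stern.symmetricForms ℝ r).subtype
  have hS (k : ℕ) : S (k + 1) f = φ ((Stern.sternEnd ℝ r ^ k) ⟨g, hg⟩) := by
    rw [← hgf, Stern.S_add_one]
    exact congrArg (S 1) (Stern.coe_sternEnd_pow_apply k ⟨g, hg⟩).symm
  obtain ⟨m, rfl⟩ : ∃ m, n = m + 1 := Nat.exists_eq_add_of_le' (by omega)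
  simp only [hS, ha m (by omega), LinearMap.sum_apply, LinearMap.smul_apply, map_sum, map_smul,
    smul_eq_mul]
  refine Finset.sum_congr rfl fun j hj => ?_
  rw [Nat.sub_add_comm (by grind), hS]
end
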